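/- Let A be an analytic subset of the first Heisenberg group ℍ (with the Korányi metric) with Hausdorff dimension dim A = s ∈ (2,4]. Then for almost every θ ∈ [0,π), dim P_{V_θ^⊥}(A) ≥ s/2 if s ∈ (2, 5/2], and dim P_{V_θ^⊥}(A) ≥ s(s+2)/(4s−1) if s ∈ (5/2, 4]. -/

import Mathlib

open Real MeasureTheory

noncomputable section

/-- Points of the plane. -/
abbrev Pt := ℝ × ℝ
/-- Points of the Heisenberg group ℍ ≅ ℂ × ℝ ≅ ℝ² × ℝ. -/
abbrev Heis := (ℝ × ℝ) × ℝ

/-- Wedge product on ℝ². -/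
def wedge (z w : Pt) : ℝ := z.1 * w.2 - z.2 * w.1

/-- Euclidean inner product on ℝ². -/
def dotP (z w : Pt) : ℝ := z.1 * w.1 + z.2 * w.2

/-- Euclidean norm on ℝ². -/
def nrm (z : Pt) : ℝ := Real.sqrt (z.1 ^ 2 + z.2 ^ 2)

/-- The unit vector e^{iθ} = (cos θ, sin θ). -/
def eV (θ : ℝ) : Pt := (Real.cos θ, Real.sin θ)

/-- The unit vector i·e^{iθ} = (−sin θ, cos θ). -/
def ieV (θ : ℝ) : Pt := (-Real.sin θ, Real.cos θ)

/-- Orthogonal projection onto the line V_θ spanned by e^{iθ}. -/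
def projV (θ : ℝ) (z : Pt) : Pt := (dotP z (eV θ)) • eV θ

/-- Orthogonal projection onto the orthogonal complement V_θ^⊥, spanned by i·e^{iθ}. -/
def projVperp (θ : ℝ) (z : Pt) : Pt := (dotP z (ieV θ)) • ieV θ

/-- Heisenberg group law. -/
def hmul (v w : Heis) : Heis := (v.1 + w.1, v.2 + w.2 - 2 * wedge v.1 w.1)

/-- Heisenberg group inverse. -/
def hinv (v : Heis) : Heis := (-v.1, -v.2)

/-- Korányi norm ‖(z,t)‖ = (|z|⁴ + t²)^{1/4}. -/
def Knorm (v : Heis) : ℝ := ((nrm v.1) ^ 4 + v.2 ^ 2) ^ ((1 : ℝ) / 4)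

/-- Korányi distance (via the explicit second-component formula). -/
def dH (v w : Heis) : ℝ :=
  ((nrm (v.1 - w.1)) ^ 4 + (v.2 - w.2 - 2 * wedge v.1 w.1) ^ 2) ^ ((1 : ℝ) / 4)

/-- Horizontal projection P_{V_θ}. -/
def PV (θ : ℝ) (v : Heis) : Heis := (projV θ v.1, 0)

/-- Vertical projection P_{V_θ^⊥}. -/
def PVperp (θ : ℝ) (v : Heis) : Heis :=
  (projVperp θ v.1, v.2 - 2 * wedge (projV θ v.1) (projVperp θ v.1))

/-- Diameter of a set with respect to the Korányi distance, valued in ENNReal. -/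
def ediamK (S : Set Heis) : ENNReal :=
  ⨆ (x : Heis) (_ : x ∈ S) (y : Heis) (_ : y ∈ S), ENNReal.ofReal (dH x y)

/-- s-dimensional Hausdorff measure with respect to the Korányi distance. -/
def hMeasK (s : ℝ) (A : Set Heis) : ENNReal :=
  ⨆ (δ : ℝ) (_ : 0 < δ),
    ⨅ (t : ℕ → Set Heis) (_ : A ⊆ ⋃ n, t n)
      (_ : ∀ n, ediamK (t n) ≤ ENNReal.ofReal δ),
      ∑' n, ediamK (t n) ^ s

/-- Hausdorff dimension with respect to the Korányi distance. -/
def hDimK (A : Set Heis) : ℝ :=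
  sInf {s : ℝ | 0 ≤ s ∧ hMeasK s A = 0}

/-!
Let `1 < α < s - 1` and `α ≤ 2`. Locally a Euclidean ball of radius `r ≤ 1` is covered by
`O(1 / r)` sets of Korányi diameter `O(r)`, so `A` has positive Euclidean `α`-dimensional Hausdorff
measure. The vertical axis has dimension one, hence a compact piece of `A` away from it carries a
probability measure `μ` giving Euclidean `r`-balls mass at most a constant times `r ^ α`.

Let `v = (z, t)` and `w = (ζ, τ)` lie in this piece and put `N = ||z|² - |ζ|²|`. If the
projections of `v` and `w` are `δ`-close for some `θ`, then `|t - τ - 2 z ∧ ζ| ≲ δ`. The set of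
all such `θ` has measure at most `O(δ / |z - ζ|)`, and even `O(δ² / N)` once `N ≫ δ`. For fixed
`v` and `η ≥ δ`, the points `w` with `|z - ζ| ≤ ρ`, `N ≤ η` and `|t - τ - 2 z ∧ ζ| ≤ η` are
covered by `O(ρ / η + 1)` Euclidean `η`-balls. Summing over dyadic `ρ` and `η`, the `μ`-integral
over `w` of the measure of this set of angles is `O(δ ^ α log (1 / δ))`. Hence, for almost every
`θ`, the mass distribution principle applies to the projection of `μ` with every exponent below
`α`.
-/

section NetContent

open scoped ENNReal

variable {C ι : Type*} (code : ℕ → C → ι) (w : ℕ → ℝ≥0∞)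

/-- The cell `c = (k, q)` of a coding of the points of `C` by a symbol `code k b` at each level `k`:
the points whose level-`k` symbol is `q`. -/
def codeCell (c : ℕ × ι) : Set C := {b | code c.1 b = c.2}

/-- The total cost of a family of cells when each cell of level `k` costs `w k`. -/
def cellCost (S : Set (ℕ × ι)) : ℝ≥0∞ := ∑' c : S, w c.1.1

/-- A family of cells covers `E`. -/
def IsCellCover (S : Set (ℕ × ι)) (E : Set C) : Prop := ∀ b ∈ E, ∃ c ∈ S, b ∈ codeCell code c

/-- The net content of `E`: the least cost of a cover of `E` by cells. -/
def netContent (E : Set C) : ℝ≥0∞ := ⨅ (S : Set (ℕ × ι)) (_ : IsCellCover code S E), cellCost w S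

/-- The symbol at each level determines the symbols at all earlier levels, so that the cells form a
forest. -/
def IsNestedCode : Prop := ∀ k b b', code (k + 1) b = code (k + 1) b' → code k b = code k b'

/-- The cells of `S` that lie in no cell of `S` of smaller level. -/
def maximalCells (S : Set (ℕ × ι)) : Set (ℕ × ι) :=
  {c ∈ S | ∀ c' ∈ S, (codeCell code c ∩ codeCell code c').Nonempty → c.1 ≤ c'.1}

lemma cellCost_mono {S T : Set (ℕ × ι)} (h : S ⊆ T) : cellCost w S ≤ cellCost w T :=
  ENNReal.tsum_mono_subtype (fun c : ℕ × ι => w c.1) h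

lemma cellCost_union_add_inter (S T : Set (ℕ × ι)) :
    cellCost w (S ∪ T) + cellCost w (S ∩ T) = cellCost w S + cellCost w T := by
  simp only [cellCost, tsum_subtype _ fun c : ℕ × ι => w c.1, ← ENNReal.tsum_add]
  exact tsum_congr (Set.indicator_union_add_inter_apply _ S T)

lemma cellCost_union_le (S T : Set (ℕ × ι)) : cellCost w (S ∪ T) ≤ cellCost w S + cellCost w T :=
  (cellCost_union_add_inter w S T).symm ▸ le_self_add

lemma cellCost_add_diff {S T : Set (ℕ × ι)} (h : S ⊆ T) :
    cellCost w S + cellCost w (T \ S) = cellCost w T := by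
  rw [← cellCost_union_add_inter, Set.union_sdiff_cancel h, Set.inter_sdiff_self]
  simp [cellCost]

lemma le_cellCost {S : Set (ℕ × ι)} {c : ℕ × ι} (hc : c ∈ S) : w c.1 ≤ cellCost w S :=
  ENNReal.le_tsum (f := fun c : S => w c.1.1) ⟨c, hc⟩

lemma netContent_le {S : Set (ℕ × ι)} {E : Set C} (h : IsCellCover code S E) :
    netContent code w E ≤ cellCost w S :=
  iInf₂_le S h

lemma netContent_mono {E F : Set C} (h : E ⊆ F) : netContent code w E ≤ netContent code w F :=
  le_iInf₂ fun _ hS => netContent_le code w fun b hb => hS b (h hb)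

lemma exists_isCellCover_of_netContent_lt {E : Set C} {x : ℝ≥0∞} (h : netContent code w E < x) :
    ∃ S, IsCellCover code S E ∧ cellCost w S < x := by
  simpa only [netContent, iInf_lt_iff, exists_prop] using h

lemma netContent_empty : netContent code w ∅ = 0 := by
  refine le_antisymm ((netContent_le code w (S := ∅) fun b hb => hb.elim).trans ?_) zero_le
  simp [cellCost]

lemma netContent_union_le (E F : Set C) :
    netContent code w (E ∪ F) ≤ netContent code w E + netContent code w F := by
  simp only [netContent, ENNReal.iInf_add, ENNReal.add_iInf]
  refine le_iInf₂ fun T hTF => le_iInf₂ fun S hSE => ?_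
  have hST : IsCellCover code (S ∪ T) (E ∪ F) := by
    rintro b (hb | hb)
    · exact (hSE b hb).imp fun c hc => ⟨Or.inl hc.1, hc.2⟩
    · exact (hTF b hb).imp fun c hc => ⟨Or.inr hc.1, hc.2⟩
  exact (netContent_le code w hST).trans (cellCost_union_le w S T)

lemma netContent_biUnion_le {κ : Type*} (s : Finset κ) (E : κ → Set C) :
    netContent code w (⋃ i ∈ s, E i) ≤ ∑ i ∈ s, netContent code w (E i) := by
  classical
  induction s using Finset.induction_on with
  | empty => simp [netContent_empty]
  | insert a s ha ih =>
    rw [Finset.set_biUnion_insert, Finset.sum_insert ha]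
    exact (netContent_union_le code w _ _).trans (by gcongr)

lemma netContent_le_of_subset_codeCell {E : Set C} (c : ℕ × ι) (h : E ⊆ codeCell code c) :
    netContent code w E ≤ w c.1 := by
  refine (netContent_le code w (S := {c}) fun b hb => ⟨c, rfl, h hb⟩).trans ?_
  simp [cellCost]

variable {code}

lemma IsNestedCode.eq_of_le (h : IsNestedCode code) {k l : ℕ} (hkl : k ≤ l) {b b' : C}
    (e : code l b = code l b') : code k b = code k b' := by
  induction l, hkl using Nat.le_induction with
  | base => exact e
  | succ l _ ih => exact ih (h _ _ _ e)

lemma IsCellCover.maximal (hn : IsNestedCode code) {S : Set (ℕ × ι)} {E : Set C}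
    (h : IsCellCover code S E) : IsCellCover code (maximalCells code S) E := by
  classical
  intro b hb
  have hex : ∃ k, ∃ c ∈ S, b ∈ codeCell code c ∧ c.1 = k := by
    obtain ⟨c, hc, hbc⟩ := h b hb
    exact ⟨c.1, c, hc, hbc, rfl⟩
  obtain ⟨c, hc, hbc, hk⟩ := Nat.find_spec hex
  refine ⟨c, ⟨hc, ?_⟩, hbc⟩
  rintro c' hc' ⟨x, hx, hx'⟩
  by_contra! hlt
  have hbx : code c'.1 b = code c'.1 x := hn.eq_of_le hlt.le (hbc.trans hx.symm)
  exact hlt.not_ge (hk ▸ Nat.find_min' hex ⟨c', hc', hbx.trans hx', rfl⟩)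

lemma mem_maximalCells_of_subset {S T : Set (ℕ × ι)} (h : S ⊆ T) {c : ℕ × ι}
    (hc : c ∈ maximalCells code T) (hS : c ∈ S) : c ∈ maximalCells code S :=
  ⟨hS, fun c' hc' => hc.2 c' (h hc')⟩

lemma isCellCover_dropped_cells (hn : IsNestedCode code) {D T : Set (ℕ × ι)} {E : Set C}
    (hD : IsCellCover code D E) (hT : IsCellCover code T E) :
    IsCellCover code ((maximalCells code D ∪ T) \ maximalCells code (D ∪ T) ∪
      maximalCells code D ∩ T) E := by
  intro b hb
  obtain ⟨c, hc, hbc⟩ := hD.maximal hn b hb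
  obtain ⟨c', hc', hbc'⟩ := hT b hb
  rcases lt_trichotomy c.1 c'.1 with h | h | h
  · exact ⟨c', Or.inl ⟨Or.inr hc', fun hX =>
      h.not_ge (hX.2 c (Or.inl hc.1) ⟨b, hbc', hbc⟩)⟩, hbc'⟩
  · have hcc : c = c' := Prod.ext h (hbc.symm.trans ((congrArg (code · b) h).trans hbc'))
    exact ⟨c, Or.inr ⟨hc, hcc ▸ hc'⟩, hbc⟩
  · exact ⟨c, Or.inl ⟨Or.inl hc, fun hX =>
      h.not_ge (hX.2 c' (Or.inr hc') ⟨b, hbc, hbc'⟩)⟩, hbc⟩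

lemma cellCost_maximalCells_union_add_netContent_le (hn : IsNestedCode code)
    {D T : Set (ℕ × ι)} {E : Set C} (hD : IsCellCover code D E) (hT : IsCellCover code T E) :
    cellCost w (maximalCells code (D ∪ T)) + netContent code w E ≤
      cellCost w (maximalCells code D) + cellCost w T := by
  set V := maximalCells code D
  set X := maximalCells code (D ∪ T)
  have hX : X ⊆ V ∪ T := fun c hc =>
    hc.1.imp (mem_maximalCells_of_subset Set.subset_union_left hc) id
  calc cellCost w X + netContent code w E
      ≤ cellCost w X + (cellCost w ((V ∪ T) \ X) + cellCost w (V ∩ T)) := by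
        gcongr
        exact (netContent_le code w (isCellCover_dropped_cells hn hD hT)).trans
          (cellCost_union_le w _ _)
    _ = cellCost w V + cellCost w T := by
        rw [← add_assoc, cellCost_add_diff w hX, cellCost_union_add_inter]

lemma cellCost_maximalCells_iUnion_le {D : ℕ → Set (ℕ × ι)} (hD : Monotone D) :
    cellCost w (maximalCells code (⋃ n, D n)) ≤ ⨆ n, cellCost w (maximalCells code (D n)) := by
  classical
  rw [cellCost, ENNReal.tsum_eq_iSup_sum]
  refine iSup_le fun F => ?_
  set G : Finset (ℕ × ι) := F.map (Function.Embedding.subtype _)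
  have hG : (G : Set (ℕ × ι)) ⊆ maximalCells code (⋃ n, D n) := by
    intro c hc
    obtain ⟨c', -, rfl⟩ := Finset.mem_map.1 hc
    exact c'.2
  obtain ⟨n, hGn⟩ := (directed_of_isDirected_le hD).exists_mem_subset_of_finset_subset_biUnion
    (hG.trans fun c hc => hc.1)
  calc ∑ c ∈ F, w c.1.1 = cellCost w (G : Set (ℕ × ι)) := by
        rw [cellCost, Finset.tsum_subtype' G fun c => w c.1, Finset.sum_map]
        rfl
    _ ≤ cellCost w (maximalCells code (D n)) := cellCost_mono w fun c hc =>
        mem_maximalCells_of_subset (Set.subset_iUnion D n) (hG hc) (hGn hc)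
    _ ≤ _ := le_iSup (fun n => cellCost w (maximalCells code (D n))) n

lemma cellCost_maximalCells_accumulate_le (hn : IsNestedCode code) {E : ℕ → Set C}
    (hE : Monotone E) (hfin : ∀ n, netContent code w (E n) ≠ ⊤) {S : ℕ → Set (ℕ × ι)}
    {e : ℕ → ℝ≥0∞} (hS : ∀ n, IsCellCover code (S n) (E n))
    (hSe : ∀ n, cellCost w (S n) ≤ netContent code w (E n) + e n) (n : ℕ) :
    cellCost w (maximalCells code (Set.accumulate S n)) ≤
      netContent code w (E n) + ∑ j ∈ Finset.range (n + 1), e j := by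
  induction n with
  | zero =>
    simpa [Set.accumulate_zero_nat] using (cellCost_mono w fun c hc => hc.1).trans (hSe 0)
  | succ n ih =>
    have hD : IsCellCover code (Set.accumulate S n) (E n) := fun b hb =>
      (hS n b hb).imp fun c hc => ⟨Set.subset_accumulate hc.1, hc.2⟩
    have hmerge := cellCost_maximalCells_union_add_netContent_le w hn hD (T := S (n + 1))
      fun b hb => hS (n + 1) b (hE n.le_succ hb)
    rw [Set.accumulate_succ, Finset.sum_range_succ]
    refine (ENNReal.add_le_add_iff_right (hfin n)).1 (hmerge.trans ?_)
    exact (add_le_add ih (hSe (n + 1))).trans_eq (by ring)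

lemma netContent_iUnion_le_iSup (hn : IsNestedCode code) {E : ℕ → Set C} (hE : Monotone E) :
    netContent code w (⋃ n, E n) ≤ ⨆ n, netContent code w (E n) := by
  refine ENNReal.le_of_forall_pos_le_add fun ε hε hLt => ?_
  obtain ⟨e, he0, hesum⟩ := ENNReal.exists_pos_sum_of_countable (ENNReal.coe_ne_zero.2 hε.ne') ℕ
  have hfin : ∀ n, netContent code w (E n) ≠ ⊤ := fun n => ((le_iSup _ n).trans_lt hLt).ne
  have hex : ∀ n, ∃ S, IsCellCover code S (E n) ∧ cellCost w S < netContent code w (E n) + e n :=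
    fun n => exists_isCellCover_of_netContent_lt code w
      (ENNReal.lt_add_right (hfin n) (ENNReal.coe_ne_zero.2 (he0 n).ne'))
  choose S hS hSe using hex
  have hcov : IsCellCover code (⋃ n, Set.accumulate S n) (⋃ n, E n) := by
    intro b hb
    obtain ⟨n, hb⟩ := Set.mem_iUnion.1 hb
    exact (hS n b hb).imp fun c hc =>
      ⟨Set.mem_iUnion.2 ⟨n, Set.subset_accumulate hc.1⟩, hc.2⟩
  calc netContent code w (⋃ n, E n)
      ≤ cellCost w (maximalCells code (⋃ n, Set.accumulate S n)) :=
        netContent_le code w (hcov.maximal hn)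
    _ ≤ ⨆ n, cellCost w (maximalCells code (Set.accumulate S n)) :=
        cellCost_maximalCells_iUnion_le w Set.monotone_accumulate
    _ ≤ (⨆ n, netContent code w (E n)) + ε := iSup_le fun n =>
        (cellCost_maximalCells_accumulate_le w hn hE hfin hS (fun n => (hSe n).le) n).trans
          (add_le_add (le_iSup (fun n => netContent code w (E n)) n)
            ((ENNReal.sum_le_tsum _).trans hesum.le))

end NetContent

section Capacitability

open scoped ENNReal

lemma exists_prefix_subset_of_isOpen {V : Set (ℕ → ℕ)} (hV : IsOpen V) (m : ℕ → ℕ)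
    (hmV : ∀ y : ℕ → ℕ, (∀ i, y i ≤ m i) → y ∈ V) :
    ∃ n, ∀ y : ℕ → ℕ, (∀ i < n, y i ≤ m i) → y ∈ V := by
  have hK : IsCompact (Set.univ.pi fun i => Set.Iic (m i)) :=
    isCompact_univ_pi fun i => (Set.finite_Iic (m i)).isCompact
  obtain ⟨n, hn⟩ : ∃ n, ∀ y ∈ Set.univ.pi fun i => Set.Iic (m i),
      ∀ z, (∀ i < n, z i = y i) → z ∈ V := by
    refine hK.induction_on ⟨0, by simp⟩ (fun s t hst => Exists.imp fun n h y hy => h y (hst hy))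
      ?_ ?_
    · rintro s t ⟨n, h⟩ ⟨n', h'⟩
      refine ⟨max n n', ?_⟩
      rintro y (hy | hy) z hz
      · exact h y hy z fun i hi => hz i (lt_max_of_lt_left hi)
      · exact h' y hy z fun i hi => hz i (lt_max_of_lt_right hi)
    · intro y hy
      obtain ⟨_, ⟨a, n, rfl⟩, hya, haV⟩ :=
        (PiNat.isTopologicalBasis_cylinders fun _ : ℕ => ℕ).mem_nhds_iff.1
          (hV.mem_nhds (hmV y fun i => hy i trivial))
      exact ⟨PiNat.cylinder a n,
        mem_nhdsWithin_of_mem_nhds ((PiNat.isOpen_cylinder _ a n).mem_nhds hya), n,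
        fun y' hy' z hz => haV fun i hi => (hz i hi).trans (hy' i hi)⟩
  exact ⟨n, fun y hy => hn (fun i => min (y i) (m i))
    (fun i _ => Set.mem_Iic.2 (min_le_right _ _)) y
    fun i hi => (min_eq_left (hy i hi)).symm⟩

variable {C ι : Type*} {code : ℕ → C → ι} (w : ℕ → ℝ≥0∞)

lemma exists_lt_netContent_image_inter (hn : IsNestedCode code) (f : (ℕ → ℕ) → C) {x : ℝ≥0∞}
    {B : Set (ℕ → ℕ)} (k : ℕ) (h : x < netContent code w (f '' B)) :
    ∃ m, x < netContent code w (f '' (B ∩ {y | y k ≤ m})) := by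
  have hmono : Monotone fun m => f '' (B ∩ {y : ℕ → ℕ | y k ≤ m}) := fun a b hab =>
    Set.image_mono (Set.inter_subset_inter_right _ fun y (hy : y k ≤ a) => hy.trans hab)
  have hcov : f '' B ⊆ ⋃ m, f '' (B ∩ {y : ℕ → ℕ | y k ≤ m}) := by
    rintro _ ⟨y, hy, rfl⟩
    exact Set.mem_iUnion.2 ⟨y k, y, ⟨hy, le_refl (y k)⟩, rfl⟩
  exact lt_iSup_iff.1 (h.trans_le ((netContent_mono code w hcov).trans
    (netContent_iUnion_le_iSup w hn hmono)))

lemma exists_lt_netContent_image_prefix (hn : IsNestedCode code) (f : (ℕ → ℕ) → C) {x : ℝ≥0∞}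
    (h : x < netContent code w (Set.range f)) :
    ∃ m : ℕ → ℕ, ∀ n, x < netContent code w (f '' {y | ∀ i < n, y i ≤ m i}) := by
  choose! g hg using fun (k : ℕ) (B : Set (ℕ → ℕ)) =>
    exists_lt_netContent_image_inter (B := B) w hn f (x := x) k
  let B : ℕ → Set (ℕ → ℕ) := Nat.rec Set.univ fun k B => B ∩ {y | y k ≤ g k B}
  have hB : ∀ n, x < netContent code w (f '' B n) := by
    intro n
    induction n with
    | zero => simpa [B] using h
    | succ n ih => exact hg n _ ih
  have hprefix : ∀ n, B n = {y | ∀ i < n, y i ≤ g i (B i)} := by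
    intro n
    induction n with
    | zero => simp [B]
    | succ n ih =>
      change B n ∩ {y | y n ≤ g n (B n)} = _
      nth_rewrite 1 [ih]
      ext y
      exact Nat.forall_lt_succ_right.symm
  exact ⟨fun k => g k (B k), fun n => hprefix n ▸ hB n⟩

lemma exists_isCompact_le_netContent [TopologicalSpace C] (hn : IsNestedCode code)
    (ho : ∀ c, IsOpen (codeCell code c)) {f : (ℕ → ℕ) → C} (hf : Continuous f) {x : ℝ≥0∞}
    (h : x < netContent code w (Set.range f)) :
    ∃ K ⊆ Set.range f, IsCompact K ∧ x ≤ netContent code w K := by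
  obtain ⟨m, hm⟩ := exists_lt_netContent_image_prefix w hn f h
  have hK : IsCompact (Set.univ.pi fun i => Set.Iic (m i)) :=
    isCompact_univ_pi fun i => (Set.finite_Iic (m i)).isCompact
  refine ⟨_, Set.image_subset_range f _, hK.image hf, le_iInf₂ fun S hS => ?_⟩
  have hopen : IsOpen (⋃ c ∈ S, codeCell code c) := isOpen_biUnion fun c _ => ho c
  obtain ⟨n, hnS⟩ := exists_prefix_subset_of_isOpen (hopen.preimage hf) m fun y hy => by
    obtain ⟨c, hc, hyc⟩ := hS _ ⟨y, fun i _ => hy i, rfl⟩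
    exact Set.mem_biUnion hc hyc
  have hcov : IsCellCover code S (f '' {y | ∀ i < n, y i ≤ m i}) := by
    rintro _ ⟨y, hy, rfl⟩
    obtain ⟨c, hc, hyc⟩ := Set.mem_iUnion₂.1 (hnS y hy)
    exact ⟨c, hc, hyc⟩
  exact (hm n).le.trans (netContent_le code w hcov)

end Capacitability

section FrostmanCoding

open Filter Topology
open scoped ENNReal

variable {C ι : Type*} {code : ℕ → C → ι} {w : ℕ → ℝ≥0∞}

lemma sum_measure_codeCell_le [MeasurableSpace C] (hn : IsNestedCode code) (F : Finset ι)
    {ν : ι → Measure C} {k l : ℕ} (hkl : k ≤ l) (hν : ∀ d, ν d (codeCell code (k, d))ᶜ = 0)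
    (r : ι) {b : ℝ≥0∞} (hb : ∀ d, ν d (codeCell code (l, r)) ≤ b) :
    ∑ d ∈ F, ν d (codeCell code (l, r)) ≤ b := by
  classical
  rcases (codeCell code (l, r)).eq_empty_or_nonempty with hr | ⟨y, hy⟩
  · simp [hr]
  have hzero : ∀ d ≠ code k y, ν d (codeCell code (l, r)) = 0 := fun d hd =>
    measure_mono_null (fun x hx (hxd : code k x = d) =>
      hd (hxd.symm.trans (hn.eq_of_le hkl (hx.trans hy.symm)))) (hν d)
  calc ∑ d ∈ F, ν d (codeCell code (l, r))
      ≤ ∑ d ∈ insert (code k y) F, ν d (codeCell code (l, r)) :=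
        Finset.sum_le_sum_of_subset (Finset.subset_insert _ _)
    _ = ν (code k y) (codeCell code (l, r)) :=
        Finset.sum_eq_single_of_mem _ (Finset.mem_insert_self _ _) fun d _ hd => hzero d hd
    _ ≤ b := hb _

lemma exists_measure_le_of_splitting [MeasurableSpace C] (F : Finset ι) {ν : ι → Measure C}
    {a : ℝ≥0∞} (htop : ∀ d, ν d Set.univ ≠ ⊤) (ha : a ≤ ∑ d ∈ F, ν d Set.univ) :
    ∃ μ : Measure C, μ Set.univ = a ∧ μ ≤ ∑ d ∈ F, ν d := by
  set s := ∑ d ∈ F, ν d Set.univ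
  have hs : s ≠ ⊤ := ENNReal.sum_ne_top.2 fun d _ => htop d
  refine ⟨(a / s) • ∑ d ∈ F, ν d, ?_, ?_⟩
  · simp only [Measure.smul_apply, Measure.finsetSum_apply, smul_eq_mul]
    exact ENNReal.div_mul_cancel' (fun h => le_zero_iff.1 (h ▸ ha)) fun h => absurd h hs
  · refine Measure.le_iff.2 fun t _ => ?_
    rw [Measure.smul_apply, smul_eq_mul]
    exact mul_le_of_le_one_left' (ENNReal.div_le_of_le_mul (by rwa [one_mul]))

/-- Distributing the content of `E` down the tree, a parent passing its mass on to its children in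
proportion to their contents. -/
lemma exists_measure_codeCell_le_to_depth [MeasurableSpace C] (hn : IsNestedCode code)
    (hfin : ∀ k, (Set.range (code k)).Finite) (hm : ∀ c, MeasurableSet (codeCell code c))
    (hw : ∀ k, w k ≠ ⊤) (j : ℕ) :
    ∀ (k : ℕ) (q : ι) (E : Set C), MeasurableSet E → E ⊆ codeCell code (k, q) →
      ∃ ν : Measure C, ν Eᶜ = 0 ∧ ν Set.univ = netContent code w E ∧
        ∀ l, k ≤ l → l ≤ k + j → ∀ r, ν (codeCell code (l, r)) ≤ w l := by
  induction j with
  | zero =>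
    intro k q E hE hEq
    have hle : netContent code w E ≤ w k := netContent_le_of_subset_codeCell code w (k, q) hEq
    obtain rfl | ⟨x, hx⟩ := E.eq_empty_or_nonempty
    · exact ⟨0, by simp [netContent_empty]⟩
    refine ⟨netContent code w E • Measure.dirac x, ?_, by simp, fun l hkl hlk r => ?_⟩
    · simp [Measure.dirac_apply' _ hE.compl, hx]
    · obtain rfl : l = k := by lia
      exact (measure_mono (Set.subset_univ _)).trans (by simpa using hle)
  | succ j ih =>
    intro k q E hE hEq
    have hle : netContent code w E ≤ w k := netContent_le_of_subset_codeCell code w (k, q) hEq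
    choose ν hνE hνuniv hνw using fun d => ih (k + 1) d (E ∩ codeCell code (k + 1, d))
      (hE.inter (hm _)) Set.inter_subset_right
    set F := (hfin (k + 1)).toFinset
    have hcov : E ⊆ ⋃ d ∈ F, E ∩ codeCell code (k + 1, d) := fun x hx =>
      Set.mem_biUnion (x := code (k + 1) x) (by simp [F]) ⟨hx, rfl⟩
    have hsum : netContent code w E ≤ ∑ d ∈ F, ν d Set.univ := by
      simp only [hνuniv]
      exact (netContent_mono code w hcov).trans (netContent_biUnion_le code w F _)
    obtain ⟨μ, hμuniv, hμ⟩ := exists_measure_le_of_splitting F (fun d => by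
      rw [hνuniv]
      exact ((netContent_le_of_subset_codeCell code w (k + 1, d)
        Set.inter_subset_right).trans_lt (hw _).lt_top).ne) hsum
    refine ⟨μ, ?_, hμuniv, fun l hkl hlk r => ?_⟩
    · refine le_zero_iff.1 ((hμ _).trans_eq ?_)
      simp only [Measure.finsetSum_apply]
      exact Finset.sum_eq_zero fun d _ =>
        measure_mono_null (Set.compl_subset_compl.2 Set.inter_subset_left) (hνE d)
    · rcases hkl.eq_or_lt with rfl | hkl
      · exact (measure_mono (Set.subset_univ _)).trans (hμuniv.trans_le hle)
      · refine (hμ _).trans ?_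
        simp only [Measure.finsetSum_apply]
        exact sum_measure_codeCell_le hn F hkl
          (fun d => measure_mono_null (Set.compl_subset_compl.2 Set.inter_subset_right) (hνE d)) r
          fun d => hνw d l hkl (by lia) r

lemma exists_isProbabilityMeasure_codeCell_le_to_depth [MeasurableSpace C]
    (hn : IsNestedCode code) (h0 : ∀ b b', code 0 b = code 0 b')
    (hfin : ∀ k, (Set.range (code k)).Finite) (hm : ∀ c, MeasurableSet (codeCell code c))
    (hw : ∀ k, w k ≠ ⊤) {K : Set C} (hK : MeasurableSet K) (hK0 : netContent code w K ≠ 0)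
    (j : ℕ) :
    ∃ ν : ProbabilityMeasure C, (ν : Measure C) Kᶜ = 0 ∧
      ∀ l ≤ j, ∀ r, (ν : Measure C) (codeCell code (l, r)) ≤ (netContent code w K)⁻¹ * w l := by
  obtain ⟨b, -⟩ : K.Nonempty := by
    rw [Set.nonempty_iff_ne_empty]
    rintro rfl
    exact hK0 (netContent_empty code w)
  have hKb : K ⊆ codeCell code (0, code 0 b) := fun x _ => h0 x b
  have hKt : netContent code w K ≠ ⊤ :=
    ((netContent_le_of_subset_codeCell code w _ hKb).trans_lt (hw 0).lt_top).ne
  obtain ⟨ν, hνK, hν1, hνw⟩ := exists_measure_codeCell_le_to_depth hn hfin hm hw j 0 _ K hK hKb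
  refine ⟨⟨(netContent code w K)⁻¹ • ν, ⟨?_⟩⟩, ?_, fun l hl r => ?_⟩
  · simp [hν1, ENNReal.inv_mul_cancel hK0 hKt]
  · simp [hνK]
  · simp only [ProbabilityMeasure.coe_mk, Measure.smul_apply, smul_eq_mul]
    gcongr
    exact hνw l l.zero_le (by lia) r

lemma netContent_ne_zero_of_hausdorffMeasure_ne_zero [Countable ι] {X : Type*}
    [MetricSpace X] [MeasurableSpace X] [BorelSpace X] {ψ : C → X}
    (hψ : ∀ c, Metric.ediam (ψ '' codeCell code c) ≤ 2⁻¹ ^ c.1) {α : ℝ} (hα : 0 < α)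
    {A : Set X} (hAψ : A ⊆ Set.range ψ) (hA : μH[α] A ≠ 0) :
    netContent code (fun k => (2⁻¹ ^ k) ^ α) (ψ ⁻¹' A) ≠ 0 := by
  have hr : Tendsto (fun n : ℕ => (2⁻¹ : ℝ≥0∞) ^ n) atTop (𝓝 0) :=
    ENNReal.tendsto_pow_atTop_nhds_zero_of_lt_one (by norm_num)
  have hanti : ∀ {m n : ℕ}, m ≤ n → (2⁻¹ : ℝ≥0∞) ^ n ≤ 2⁻¹ ^ m := fun h =>
    pow_le_pow_right_of_le_one' (by norm_num) h
  set w : ℕ → ℝ≥0∞ := fun k => (2⁻¹ ^ k) ^ α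
  have hwlim : Tendsto w atTop (𝓝 0) := by
    simpa [ENNReal.zero_rpow_of_pos hα, Function.comp_def] using
      ((ENNReal.continuous_rpow_const (y := α)).tendsto 0).comp hr
  refine mt (fun hzero => ?_) hA
  have hwpos : ∀ n, 0 < w n := fun n =>
    ENNReal.rpow_pos (ENNReal.pow_pos (by norm_num) n) (ENNReal.pow_ne_top (by norm_num))
  choose S hS hSw using fun n => exists_isCellCover_of_netContent_lt code w (x := w n)
    (hzero.trans_lt (hwpos n))
  have hlevel : ∀ n, ∀ c ∈ S n, n ≤ c.1 := fun n c hc => by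
    by_contra! hlt
    exact ((le_cellCost w hc).trans_lt (hSw n)).not_ge
      (ENNReal.rpow_le_rpow (hanti hlt.le) hα.le)
  have hcost : ∀ n, ∑' c : S n, Metric.ediam (ψ '' codeCell code c.1) ^ α ≤ w n := fun n =>
    calc ∑' c : S n, Metric.ediam (ψ '' codeCell code c.1) ^ α
        ≤ ∑' c : S n, w c.1.1 :=
          ENNReal.tsum_le_tsum fun c => ENNReal.rpow_le_rpow (hψ c.1) hα.le
      _ ≤ w n := (hSw n).le
  refine le_zero_iff.1 ((Measure.hausdorffMeasure_le_liminf_tsum α A _ hr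
    (fun n (c : S n) => ψ '' codeCell code c.1) ?_ ?_).trans
      ((liminf_le_liminf (Eventually.of_forall hcost)).trans_eq hwlim.liminf_eq))
  · exact Eventually.of_forall fun n c => (hψ c.1).trans (hanti (hlevel n c.1 c.2))
  · refine Eventually.of_forall fun n x hx => ?_
    obtain ⟨b, rfl⟩ := hAψ hx
    obtain ⟨c, hc, hbc⟩ := hS n b hx
    exact Set.mem_iUnion.2 ⟨⟨c, hc⟩, b, hbc, rfl⟩

variable [TopologicalSpace C] [MeasurableSpace C] [BorelSpace C]

lemma exists_isProbabilityMeasure_codeCell_le [CompactSpace C] [T2Space C] [HasOuterApproxClosed C]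
    (hn : IsNestedCode code) (h0 : ∀ b b', code 0 b = code 0 b')
    (hfin : ∀ k, (Set.range (code k)).Finite) (ho : ∀ c, IsOpen (codeCell code c))
    (hw : ∀ k, w k ≠ ⊤) {K : Set C} (hK : IsCompact K) (hK0 : netContent code w K ≠ 0) :
    ∃ ν : Measure C, IsProbabilityMeasure ν ∧ ν Kᶜ = 0 ∧
      ∀ k q, ν (codeCell code (k, q)) ≤ (netContent code w K)⁻¹ * w k := by
  choose ν hνK hνw using exists_isProbabilityMeasure_codeCell_le_to_depth hn h0 hfin
    (fun c => (ho c).measurableSet) hw hK.measurableSet hK0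
  obtain ⟨μ, -, hμ⟩ := isCompact_univ.ultrafilter_le_nhds ((hyperfilter ℕ).map ν) (by simp)
  have hlim : Tendsto ν (hyperfilter ℕ : Filter ℕ) (𝓝 μ) := hμ
  have hopen : ∀ {G : Set C}, IsOpen G → ∀ {c : ℝ≥0∞},
      (∀ᶠ j in atTop, (ν j : Measure C) G ≤ c) → (μ : Measure C) G ≤ c := by
    intro G hG c hc
    refine (ProbabilityMeasure.le_liminf_measure_open_of_tendsto hlim hG).trans ?_
    exact (liminf_le_liminf (Nat.hyperfilter_le_atTop hc)).trans (by simp)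
  refine ⟨μ, inferInstance, ?_, fun k q => hopen (ho _) ?_⟩
  · exact le_zero_iff.1 (hopen hK.isClosed.isOpen_compl (Eventually.of_forall fun j => (hνK j).le))
  · filter_upwards [eventually_ge_atTop k] with j hj using hνw j k hj q

lemma exists_measure_codeCell_le_of_hausdorffMeasure_ne_zero [CompactSpace C] [PolishSpace C]
    [HasOuterApproxClosed C] [Countable ι] {X : Type*} [MetricSpace X] [MeasurableSpace X]
    [BorelSpace X] (hn : IsNestedCode code) (h0 : ∀ b b', code 0 b = code 0 b')
    (hfin : ∀ k, (Set.range (code k)).Finite) (ho : ∀ c, IsOpen (codeCell code c))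
    {ψ : C → X} (hψ : Continuous ψ) (hd : ∀ c, Metric.ediam (ψ '' codeCell code c) ≤ 2⁻¹ ^ c.1)
    {α : ℝ} (hα : 0 < α) {A : Set X} (hA : AnalyticSet A) (hAψ : A ⊆ Set.range ψ)
    (hpos : μH[α] A ≠ 0) :
    ∃ (ν : Measure C) (D : ℝ≥0∞) (K : Set X), IsProbabilityMeasure ν ∧ D ≠ ⊤ ∧ IsCompact K ∧
      K ⊆ A ∧ ν (ψ ⁻¹' K)ᶜ = 0 ∧ ∀ k q, ν (codeCell code (k, q)) ≤ D * (2⁻¹ ^ k) ^ α := by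
  have hcont := netContent_ne_zero_of_hausdorffMeasure_ne_zero hd hα hAψ hpos
  set w : ℕ → ℝ≥0∞ := fun k => (2⁻¹ ^ k) ^ α
  have hAψ : AnalyticSet (ψ ⁻¹' A) := hA.preimage hψ
  rw [AnalyticSet] at hAψ
  obtain he | ⟨f, hf, hfA⟩ := hAψ
  · exact absurd (he ▸ netContent_empty code w) hcont
  obtain ⟨x, hx0, hx⟩ := exists_between (pos_iff_ne_zero.2 (hfA ▸ hcont))
  obtain ⟨K, hKf, hK, hxK⟩ := exists_isCompact_le_netContent w hn ho hf hx
  have hK0 : netContent code w K ≠ 0 := (hx0.trans_le hxK).ne'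
  obtain ⟨ν, hν, hνK, hνw⟩ := exists_isProbabilityMeasure_codeCell_le hn h0 hfin ho
    (fun k => by finiteness) hK hK0
  refine ⟨ν, _, ψ '' K, hν, ENNReal.inv_ne_top.2 hK0, hK.image hψ, ?_, ?_, hνw⟩
  · exact Set.image_subset_iff.2 (hfA ▸ hKf)
  · exact measure_mono_null (Set.compl_subset_compl.2 (Set.subset_preimage_image _ _)) hνK

end FrostmanCoding

section DyadicCoding

open scoped ENNReal

/-- The integer whose binary digits are `b 0, …, b (k - 1)`, most significant first. -/
def digitPrefix : ℕ → (ℕ → Fin 2) → ℕ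
  | 0, _ => 0
  | k + 1, b => 2 * digitPrefix k b + (b k : ℕ)

lemma sum_ofDigitsTerm_eq_digitPrefix_div (k : ℕ) (b : ℕ → Fin 2) :
    ∑ i ∈ Finset.range k, Real.ofDigitsTerm b i = digitPrefix k b / 2 ^ k := by
  induction k with
  | zero => simp [digitPrefix]
  | succ k ih =>
    rw [Finset.sum_range_succ, ih]
    simp only [digitPrefix, Real.ofDigitsTerm]
    push_cast
    field_simp
    ring

lemma ofDigits_mem_Icc_digitPrefix (k : ℕ) (b : ℕ → Fin 2) :
    Real.ofDigits b ∈
      Set.Icc ((digitPrefix k b : ℝ) / 2 ^ k) ((digitPrefix k b : ℝ) / 2 ^ k + (1 / 2) ^ k) := by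
  have hsplit : Real.ofDigits b =
      (digitPrefix k b : ℝ) / 2 ^ k + (1 / 2) ^ k * Real.ofDigits fun i => b (i + k) := by
    rw [Real.ofDigits_eq_sum_add_ofDigits b k, sum_ofDigitsTerm_eq_digitPrefix_div]
    simp
  have htail : 0 ≤ (1 / 2 : ℝ) ^ k * Real.ofDigits fun i => b (i + k) :=
    mul_nonneg (by positivity) (Real.ofDigits_nonneg _)
  have htail' : (1 / 2 : ℝ) ^ k * Real.ofDigits (fun i => b (i + k)) ≤ (1 / 2) ^ k :=
    mul_le_of_le_one_right (by positivity) (Real.ofDigits_le_one _)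
  exact hsplit ▸ ⟨by linarith, by linarith⟩

lemma digitPrefix_lt (k : ℕ) (b : ℕ → Fin 2) : digitPrefix k b < 2 ^ k := by
  induction k with
  | zero => simp [digitPrefix]
  | succ k ih =>
    have := (b k).2
    simp only [digitPrefix, pow_succ]
    lia

lemma isNestedCode_digitPrefix : IsNestedCode digitPrefix := by
  intro k b b' h
  have := (b k).2
  have := (b' k).2
  simp only [digitPrefix] at h
  lia

lemma continuous_digitPrefix (k : ℕ) : Continuous (digitPrefix k) := by
  induction k with
  | zero => exact continuous_const
  | succ k ih =>
    exact (continuous_const.mul ih).add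
      ((continuous_of_discreteTopology (f := fun x : Fin 2 => (x : ℕ))).comp (continuous_apply k))

lemma dist_ofDigits_le {k : ℕ} {b b' : ℕ → Fin 2} (h : digitPrefix k b = digitPrefix k b') :
    dist (Real.ofDigits b) (Real.ofDigits b') ≤ (1 / 2) ^ k := by
  have hb := ofDigits_mem_Icc_digitPrefix k b
  have hb' := ofDigits_mem_Icc_digitPrefix k b'
  rw [h] at hb
  exact (Real.dist_le_of_mem_Icc hb hb').trans_eq (by ring)

lemma digitPrefix_mem_Icc_of_dist_le {k : ℕ} {b : ℕ → Fin 2} {x : ℝ}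
    (h : dist (Real.ofDigits b) x ≤ (1 / 2) ^ k) :
    digitPrefix k b ∈ Finset.Icc ⌊x * 2 ^ k - 2⌋₊ (⌊x * 2 ^ k - 2⌋₊ + 3) := by
  have hpow : (1 / 2 : ℝ) ^ k * 2 ^ k = 1 := by rw [← mul_pow]; norm_num
  have hprefix : (digitPrefix k b : ℝ) / 2 ^ k * 2 ^ k = digitPrefix k b := by field_simp
  have hb := ofDigits_mem_Icc_digitPrefix k b
  have hx := abs_le.1 h
  have hlower := mul_le_mul_of_nonneg_right (a := (2 : ℝ) ^ k)
    (show x - 2 * (1 / 2) ^ k ≤ (digitPrefix k b : ℝ) / 2 ^ k by linarith [hb.2]) (by positivity)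
  have hupper := mul_le_mul_of_nonneg_right (a := (2 : ℝ) ^ k)
    (show (digitPrefix k b : ℝ) / 2 ^ k ≤ x + (1 / 2) ^ k by linarith [hb.1]) (by positivity)
  rw [sub_mul, mul_assoc, hpow, hprefix] at hlower
  rw [add_mul, hpow, hprefix] at hupper
  refine Finset.mem_Icc.2 ⟨Nat.floor_le_of_le (by linarith), ?_⟩
  have hlt : (digitPrefix k b : ℝ) < ⌊x * 2 ^ k - 2⌋₊ + 4 := by
    linarith [Nat.lt_floor_add_one (x * 2 ^ k - 2)]
  have : digitPrefix k b < ⌊x * 2 ^ k - 2⌋₊ + 4 := by exact_mod_cast hlt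
  lia

variable {n : Type*}

/-- The coding of the points of the cube `p + [0, 1]ⁿ` by the coordinates of the dyadic cubes that
contain them. -/
def dyadicCode (k : ℕ) (b : n → ℕ → Fin 2) : n → ℕ := fun i => digitPrefix k (b i)

/-- The point of the cube `p + [0, 1]ⁿ` with given binary expansions. -/
def dyadicPoint (p : n → ℝ) (b : n → ℕ → Fin 2) : n → ℝ := fun i => p i + Real.ofDigits (b i)

lemma isNestedCode_dyadicCode : IsNestedCode (dyadicCode (n := n)) := fun k b b' h =>
  funext fun i => isNestedCode_digitPrefix k (b i) (b' i) (congrFun h i)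

lemma continuous_dyadicCode (k : ℕ) : Continuous (dyadicCode (n := n) k) :=
  continuous_pi fun i => (continuous_digitPrefix k).comp (continuous_apply i)

lemma continuous_dyadicPoint (p : n → ℝ) : Continuous (dyadicPoint p) :=
  continuous_pi fun i =>
    continuous_const.add ((Real.continuous_ofDigits (b := 2)).comp (continuous_apply i))

lemma range_dyadicPoint (p : n → ℝ) : Set.Icc p (p + 1) ⊆ Set.range (dyadicPoint p) := by
  intro x hx
  have hdigits : ∀ i, ∃ b : ℕ → Fin 2, Real.ofDigits b = x i - p i := fun i => by
    obtain ⟨b, -, hb⟩ := Real.ofDigits_SurjOn (b := 2) one_lt_two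
      (show x i - p i ∈ Set.Icc (0 : ℝ) 1 from
        ⟨sub_nonneg.2 (hx.1 i), sub_le_iff_le_add'.2 (hx.2 i)⟩)
    exact ⟨b, hb⟩
  choose b hb using hdigits
  exact ⟨b, funext fun i => by simp [dyadicPoint, hb]⟩

lemma finite_range_dyadicCode [Finite n] (k : ℕ) : (Set.range (dyadicCode (n := n) k)).Finite :=
  (Set.Finite.pi' fun _ : n => Set.finite_Iio (2 ^ k)).subset
    (Set.range_subset_iff.2 fun b i => digitPrefix_lt k (b i))

lemma isOpen_codeCell_dyadicCode [Finite n] (c : ℕ × (n → ℕ)) : IsOpen (codeCell dyadicCode c) :=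
  (isOpen_discrete {c.2}).preimage (continuous_dyadicCode c.1)

variable [Fintype n]

lemma ediam_dyadicPoint_image_codeCell_le (p : n → ℝ) (c : ℕ × (n → ℕ)) :
    Metric.ediam (dyadicPoint p '' codeCell dyadicCode c) ≤ 2⁻¹ ^ c.1 := by
  refine Metric.ediam_le ?_
  rintro _ ⟨b, hb, rfl⟩ _ ⟨b', hb', rfl⟩
  have hdist : dist (dyadicPoint p b) (dyadicPoint p b') ≤ (1 / 2) ^ c.1 := by
    refine (dist_pi_le_iff (by positivity)).2 fun i => ?_
    rw [dyadicPoint, dyadicPoint, dist_add_left]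
    exact dist_ofDigits_le (congrFun (hb.trans hb'.symm) i)
  rw [edist_dist]
  refine (ENNReal.ofReal_le_ofReal hdist).trans_eq ?_
  rw [ENNReal.ofReal_pow (by norm_num), one_div, ENNReal.ofReal_inv_of_pos two_pos,
    ENNReal.ofReal_ofNat]

lemma measure_dyadicPoint_preimage_closedBall_le (p : n → ℝ) (ν : Measure (n → ℕ → Fin 2)) (k : ℕ)
    {b : ℝ≥0∞} (hν : ∀ q, ν (codeCell dyadicCode (k, q)) ≤ b) (x : n → ℝ) {r : ℝ} (hr : 0 ≤ r)
    (hrk : r ≤ (1 / 2) ^ k) :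
    ν (dyadicPoint p ⁻¹' Metric.closedBall x r) ≤ 4 ^ Fintype.card n * b := by
  classical
  let I : n → Finset ℕ := fun i =>
    Finset.Icc ⌊(x i - p i) * 2 ^ k - 2⌋₊ (⌊(x i - p i) * 2 ^ k - 2⌋₊ + 3)
  have hI : (Fintype.piFinset I).card = 4 ^ Fintype.card n := by
    have hcard : ∀ i, (I i).card = 4 := fun i => by simp [I]; lia
    simp [Fintype.card_piFinset, hcard]
  have hsub : dyadicPoint p ⁻¹' Metric.closedBall x r ⊆
      ⋃ q ∈ Fintype.piFinset I, codeCell dyadicCode (k, q) := by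
    intro b hb
    refine Set.mem_biUnion (x := dyadicCode k b) ?_ rfl
    refine Finset.mem_coe.2 (Fintype.mem_piFinset.2 fun i => digitPrefix_mem_Icc_of_dist_le ?_)
    have hi := (dist_pi_le_iff hr).1 (Metric.mem_closedBall.1 hb) i
    rw [Real.dist_eq] at hi ⊢
    exact (le_of_eq (by simp only [dyadicPoint]; ring_nf)).trans (hi.trans hrk)
  calc ν (dyadicPoint p ⁻¹' Metric.closedBall x r)
      ≤ ∑ q ∈ Fintype.piFinset I, ν (codeCell dyadicCode (k, q)) :=
        (measure_mono hsub).trans (measure_biUnion_finset_le _ _)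
    _ ≤ ∑ _q ∈ Fintype.piFinset I, b := Finset.sum_le_sum fun q _ => hν q
    _ = 4 ^ Fintype.card n * b := by rw [Finset.sum_const, hI, nsmul_eq_mul]; push_cast; rfl

end DyadicCoding

section Frostman

open scoped ENNReal

lemma analyticSet_inter {X : Type*} [TopologicalSpace X] [T2Space X] {A B : Set X}
    (hA : AnalyticSet A) (hB : AnalyticSet B) : AnalyticSet (A ∩ B) := by
  rw [Set.inter_eq_iInter]
  exact AnalyticSet.iInter (Bool.rec hB hA)

/-- The Frostman condition of exponent `α`: balls of radius `r` have measure at most `D * r ^ α`. -/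
def IsFrostman {X : Type*} [PseudoMetricSpace X] [MeasurableSpace X] (μ : Measure X) (D α : ℝ) :
    Prop :=
  ∀ x r, 0 < r → μ (Metric.closedBall x r) ≤ ENNReal.ofReal (D * r ^ α)

lemma isFrostman_of_measure_closedBall_dyadic_le {X : Type*} [PseudoMetricSpace X]
    [MeasurableSpace X] {μ : Measure X} [IsProbabilityMeasure μ] {D α : ℝ} (hD : 0 ≤ D)
    (hα : 0 < α)
    (h : ∀ x r (k : ℕ), 0 < r → r ≤ (1 / 2) ^ k →
      μ (Metric.closedBall x r) ≤ ENNReal.ofReal (D * ((1 / 2) ^ k) ^ α)) :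
    IsFrostman μ (D * 2 ^ α + 1) α := by
  intro x r hr
  have hrα : 0 < r ^ α := Real.rpow_pos_of_pos hr α
  have hDα : 0 ≤ D * 2 ^ α := by positivity
  rcases le_or_gt 1 r with h1 | h1
  · refine prob_le_one.trans (ENNReal.one_le_ofReal.2 ?_)
    nlinarith [Real.one_le_rpow h1 hα.le]
  obtain ⟨k, hk, hrk⟩ := exists_nat_pow_near_of_lt_one hr h1.le (y := (1 / 2 : ℝ))
    (by norm_num) (by norm_num)
  refine (h x r k hr hrk).trans (ENNReal.ofReal_le_ofReal ?_)
  have hpow : ((1 / 2 : ℝ) ^ k) ^ α ≤ 2 ^ α * r ^ α := by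
    rw [← Real.mul_rpow two_pos.le hr.le]
    exact Real.rpow_le_rpow (by positivity) (by rw [pow_succ] at hk; linarith) hα.le
  nlinarith

variable {n : Type*} [Fintype n] {α : ℝ}

lemma exists_isFrostman_of_subset_cube (p : n → ℝ) {A : Set (n → ℝ)} (hA : AnalyticSet A)
    (hAp : A ⊆ Set.Icc p (p + 1)) (hα : 0 < α) (hpos : μH[α] A ≠ 0) :
    ∃ (μ : Measure (n → ℝ)) (D : ℝ) (K : Set (n → ℝ)), IsProbabilityMeasure μ ∧ 0 < D ∧
      IsCompact K ∧ K ⊆ A ∧ μ Kᶜ = 0 ∧ IsFrostman μ D α := by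
  have : PolishSpace (ℕ → Fin 2) := {}
  have : PolishSpace (n → ℕ → Fin 2) := {}
  obtain ⟨ν, D, K, hν, hD, hK, hKA, hνK, hνD⟩ :=
    exists_measure_codeCell_le_of_hausdorffMeasure_ne_zero isNestedCode_dyadicCode
      (fun _ _ => rfl) finite_range_dyadicCode isOpen_codeCell_dyadicCode
      (continuous_dyadicPoint p) (ediam_dyadicPoint_image_codeCell_le p) hα hA
      (hAp.trans (range_dyadicPoint p)) hpos
  have hmeas : Measurable (dyadicPoint p) := (continuous_dyadicPoint p).measurable
  have hμ := Measure.isProbabilityMeasure_map (μ := ν) hmeas.aemeasurable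
  have hD' : 0 ≤ 4 ^ Fintype.card n * D.toReal := by positivity
  refine ⟨ν.map (dyadicPoint p), _, K, hμ, ?_, hK, hKA, ?_,
    isFrostman_of_measure_closedBall_dyadic_le hD' hα fun x r k hr hrk => ?_⟩
  · positivity
  · rwa [Measure.map_apply hmeas hK.measurableSet.compl]
  · rw [Measure.map_apply hmeas Metric.isClosed_closedBall.measurableSet]
    refine (measure_dyadicPoint_preimage_closedBall_le p ν k (hνD k) x hr.le hrk).trans_eq ?_
    have hpow : ENNReal.ofReal ((1 / 2) ^ k) = 2⁻¹ ^ k := by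
      rw [ENNReal.ofReal_pow (by norm_num), one_div, ENNReal.ofReal_inv_of_pos two_pos,
        ENNReal.ofReal_ofNat]
    rw [mul_assoc, ENNReal.ofReal_mul (by positivity), ENNReal.ofReal_mul (by positivity),
      ENNReal.ofReal_toReal hD, ← ENNReal.ofReal_rpow_of_pos (by positivity), hpow,
      ENNReal.ofReal_pow (by norm_num), ENNReal.ofReal_ofNat]

lemma exists_isFrostman_pi {A : Set (n → ℝ)} (hA : AnalyticSet A) (hα : 0 < α)
    (hpos : μH[α] A ≠ 0) :
    ∃ (μ : Measure (n → ℝ)) (D : ℝ) (K : Set (n → ℝ)), IsProbabilityMeasure μ ∧ 0 < D ∧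
      IsCompact K ∧ K ⊆ A ∧ μ Kᶜ = 0 ∧ IsFrostman μ D α := by
  let p : (n → ℤ) → n → ℝ := fun m i => m i
  have hcover : A ⊆ ⋃ m, A ∩ Set.Icc (p m) (p m + 1) := fun x hx =>
    Set.mem_iUnion.2 ⟨fun i => ⌊x i⌋, hx, fun i => Int.floor_le _, fun i =>
      (Int.lt_floor_add_one _).le⟩
  obtain ⟨m, hm⟩ : ∃ m, μH[α] (A ∩ Set.Icc (p m) (p m + 1)) ≠ 0 := by
    by_contra! h
    exact hpos (measure_mono_null hcover (measure_iUnion_null h))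
  obtain ⟨μ, D, K, hμ, hD, hK, hKA, hrest⟩ := exists_isFrostman_of_subset_cube (p m)
    (analyticSet_inter hA isClosed_Icc.analyticSet) Set.inter_subset_right hα hm
  exact ⟨μ, D, K, hμ, hD, hK, hKA.trans Set.inter_subset_left, hrest⟩

lemma exists_isFrostman_of_isometryEquiv {X : Type*} [MetricSpace X] [MeasurableSpace X]
    [BorelSpace X] (e : X ≃ᵢ (n → ℝ)) {A : Set X} (hA : AnalyticSet A) (hα : 0 < α)
    (hpos : μH[α] A ≠ 0) :
    ∃ (μ : Measure X) (D : ℝ) (K : Set X), IsProbabilityMeasure μ ∧ 0 < D ∧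
      IsCompact K ∧ K ⊆ A ∧ μ Kᶜ = 0 ∧ IsFrostman μ D α := by
  obtain ⟨μ, D, K, hμ, hD, hK, hKA, hμK, hμD⟩ := exists_isFrostman_pi
    (hA.image_of_continuous e.continuous) hα (by rwa [e.hausdorffMeasure_image])
  have hmeas : Measurable e.symm := e.symm.continuous.measurable
  refine ⟨μ.map e.symm, D, e.symm '' K, Measure.isProbabilityMeasure_map hmeas.aemeasurable, hD,
    hK.image e.symm.continuous, ?_, ?_, fun x r hr => ?_⟩
  · rintro _ ⟨y, hy, rfl⟩
    obtain ⟨a, ha, rfl⟩ := hKA hy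
    simpa using ha
  · rw [Measure.map_apply hmeas (hK.image e.symm.continuous).measurableSet.compl,
      Set.preimage_compl, e.symm.injective.preimage_image]
    exact hμK
  · rw [Measure.map_apply hmeas Metric.isClosed_closedBall.measurableSet,
      e.symm.preimage_closedBall]
    exact hμD _ r hr

end Frostman

section Slices

lemma exists_fin_slices {X : Type*} {f : X → ℝ} {S : Set X} {c L η : ℝ} (hL : 0 ≤ L) (hη : 0 < η)
    (hf : ∀ x ∈ S, |f x - c| ≤ L) :
    ∃ (M : ℕ) (u : Fin M → Set X), (M : ℝ) ≤ 2 * L / η + 1 ∧ S ⊆ ⋃ i, u i ∧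
      ∀ i, u i ⊆ S ∧ ∀ x ∈ u i, ∀ y ∈ u i, |f x - f y| ≤ η := by
  let index : X → ℕ := fun x => ⌊(f x - c + L) / η⌋₊
  have hindex : ∀ x ∈ S, (index x : ℝ) * η ≤ f x - c + L ∧ f x - c + L < (index x + 1) * η := by
    intro x hx
    have hnonneg : 0 ≤ (f x - c + L) / η := div_nonneg (by linarith [(abs_le.1 (hf x hx)).1]) hη.le
    exact ⟨(le_div_iff₀ hη).1 (Nat.floor_le hnonneg), (div_lt_iff₀ hη).1 (Nat.lt_floor_add_one _)⟩
  refine ⟨⌊2 * L / η⌋₊ + 1, fun i => {x ∈ S | index x = i}, ?_, fun x hx => ?_, fun i =>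
    ⟨Set.sep_subset _ _, ?_⟩⟩
  · push_cast
    linarith [Nat.floor_le (show 0 ≤ 2 * L / η by positivity)]
  · have hlt : index x < ⌊2 * L / η⌋₊ + 1 := Nat.lt_succ_of_le <| Nat.floor_mono <|
      div_le_div_of_nonneg_right (by linarith [(abs_le.1 (hf x hx)).2]) hη.le
    exact Set.mem_iUnion.2 ⟨⟨index x, hlt⟩, hx, rfl⟩
  · rintro x ⟨hx, hxi⟩ y ⟨hy, hyi⟩
    have hx' := hindex x hx
    have hy' := hindex y hy
    rw [hxi] at hx'
    rw [hyi] at hy'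
    rw [abs_le]
    constructor <;> linarith

end Slices

section HeisenbergGeometry

open ComplexConjugate

/-- The horizontal component `z` of a point `(z, t)`, as a complex number. -/
def horiz (v : Heis) : ℂ := ⟨v.1.1, v.1.2⟩

/-- The vertical component `t - τ - 2 z ∧ ζ` of `w⁻¹ v`, where `v = (z, t)` and `w = (ζ, τ)`. -/
def vertDiff (v w : Heis) : ℝ := v.2 - w.2 - 2 * wedge v.1 w.1

lemma horiz_sub (v w : Heis) : horiz (v - w) = horiz v - horiz w := rfl

lemma continuous_horiz : Continuous horiz :=
  Complex.equivRealProdCLM.symm.continuous.comp continuous_fst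

lemma abs_wedge_le (v w : Heis) : |wedge v.1 w.1| ≤ ‖horiz v‖ * ‖horiz w‖ := by
  have hwedge : wedge v.1 w.1 = (conj (horiz v) * horiz w).im := by
    simp only [wedge, horiz, Complex.mul_im, Complex.conj_re, Complex.conj_im]
    ring
  rw [hwedge, ← RCLike.norm_conj (horiz v), ← norm_mul]
  exact Complex.abs_im_le_norm _

lemma norm_horiz_sub_le (v w : Heis) : ‖horiz v - horiz w‖ ≤ 2 * dist v w := by
  have hre : |(horiz v - horiz w).re| ≤ dist v w :=
    (le_max_left _ _).trans (le_max_left _ _)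
  have him : |(horiz v - horiz w).im| ≤ dist v w :=
    (le_max_right _ _).trans (le_max_left _ _)
  linarith [Complex.norm_le_abs_re_add_abs_im (horiz v - horiz w)]

lemma dist_le_of_norm_horiz_sub_le {v w : Heis} {r : ℝ} (hz : ‖horiz v - horiz w‖ ≤ r)
    (ht : |v.2 - w.2| ≤ r) : dist v w ≤ r :=
  max_le (max_le ((Complex.abs_re_le_norm _).trans hz) ((Complex.abs_im_le_norm _).trans hz)) ht

lemma vertDiff_eq_sub_add_wedge (v w : Heis) :
    vertDiff v w = v.2 - w.2 + 2 * wedge w.1 (v - w).1 := by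
  simp only [vertDiff, wedge, Prod.fst_sub, Prod.snd_sub]
  ring

lemma vertDiff_eq_vertDiff_sub_vertDiff (v w u : Heis) :
    vertDiff v w = vertDiff v u - vertDiff w u - 2 * wedge (v - u).1 (w - u).1 := by
  simp only [vertDiff, wedge, Prod.fst_sub, Prod.snd_sub]
  ring

lemma abs_vertDiff_sub_le (v w : Heis) :
    |vertDiff v w - (v.2 - w.2)| ≤ 2 * (‖horiz w‖ * ‖horiz v - horiz w‖) := by
  rw [vertDiff_eq_sub_add_wedge, add_sub_cancel_left, abs_mul, abs_two]
  exact mul_le_mul_of_nonneg_left (abs_wedge_le w (v - w)) two_pos.le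

lemma dH_le_iff {v w : Heis} {c : ℝ} (hc : 0 ≤ c) :
    dH v w ≤ c ↔ ‖horiz v - horiz w‖ ^ 4 + vertDiff v w ^ 2 ≤ c ^ 4 := by
  have hnrm : nrm (v.1 - w.1) = ‖horiz v - horiz w‖ := by
    rw [← horiz_sub, Complex.norm_eq_sqrt_sq_add_sq]
    rfl
  rw [dH, hnrm, one_div, Real.rpow_inv_le_iff_of_pos (by positivity) hc (by norm_num)]
  norm_cast

lemma continuous_dH : Continuous fun p : Heis × Heis => dH p.1 p.2 := by
  unfold dH nrm wedge
  refine Continuous.rpow_const ?_ fun _ => Or.inr (by norm_num)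
  fun_prop

lemma dH_le_of_abs_vertDiff_sub_le {v w u : Heis} {r : ℝ} (hvu : dist v u ≤ r) (hwu : dist w u ≤ r)
    (hvw : dist v w ≤ r) (hT : |vertDiff v u - vertDiff w u| ≤ r ^ 2) : dH v w ≤ 4 * r := by
  have hr : 0 ≤ r := dist_nonneg.trans hvw
  have hwedge : |wedge (v - u).1 (w - u).1| ≤ (2 * r) * (2 * r) :=
    (abs_wedge_le _ _).trans <| mul_le_mul ((norm_horiz_sub_le v u).trans (by linarith))
      ((norm_horiz_sub_le w u).trans (by linarith)) (norm_nonneg _) (by positivity)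
  have hvert : |vertDiff v w| ≤ 9 * r ^ 2 := by
    rw [vertDiff_eq_vertDiff_sub_vertDiff v w u]
    rw [abs_le] at hT hwedge ⊢
    constructor <;> linarith [hT.1, hT.2, hwedge.1, hwedge.2]
  rw [dH_le_iff (by positivity)]
  calc ‖horiz v - horiz w‖ ^ 4 + vertDiff v w ^ 2
      ≤ (2 * r) ^ 4 + (9 * r ^ 2) ^ 2 := by
        have hz := (norm_horiz_sub_le v w).trans (mul_le_mul_of_nonneg_left hvw two_pos.le)
        exact add_le_add (pow_le_pow_left₀ (norm_nonneg _) hz 4)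
          (sq_le_sq.2 (hvert.trans (le_abs_self _)))
    _ ≤ (4 * r) ^ 4 := by nlinarith [pow_nonneg hr 4]

end HeisenbergGeometry

section KoranyiMeasure

open scoped ENNReal

lemma ediamK_empty : ediamK ∅ = 0 := by simp [ediamK]

lemma ediamK_le {S : Set Heis} {c : ℝ} (h : ∀ v ∈ S, ∀ w ∈ S, dH v w ≤ c) :
    ediamK S ≤ ENNReal.ofReal c :=
  iSup₂_le fun v hv => iSup₂_le fun w hw => ENNReal.ofReal_le_ofReal (h v hv w hw)

lemma dH_le_of_ediamK_le {S : Set Heis} {c : ℝ} (hc : 0 ≤ c) (h : ediamK S ≤ ENNReal.ofReal c)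
    {v w : Heis} (hv : v ∈ S) (hw : w ∈ S) : dH v w ≤ c :=
  (ENNReal.ofReal_le_ofReal_iff hc).1 <|
    (le_iSup₂_of_le v hv
      (le_iSup₂ (f := fun w (_ : w ∈ S) => ENNReal.ofReal (dH v w)) w hw)).trans h

variable {p : ℝ} {A : Set Heis}

lemma exists_cover_of_hMeasK_eq_zero (h : hMeasK p A = 0) {δ : ℝ} (hδ : 0 < δ) {ε : ℝ≥0∞}
    (hε : ε ≠ 0) :
    ∃ t : ℕ → Set Heis, A ⊆ ⋃ i, t i ∧ (∀ i, ediamK (t i) ≤ ENNReal.ofReal δ) ∧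
      ∑' i, ediamK (t i) ^ p < ε := by
  have hinf : ⨅ (t : ℕ → Set Heis) (_ : A ⊆ ⋃ n, t n) (_ : ∀ n, ediamK (t n) ≤ ENNReal.ofReal δ),
      ∑' n, ediamK (t n) ^ p < ε := by
    refine lt_of_le_of_lt ?_ (pos_iff_ne_zero.2 hε)
    rw [← h, hMeasK]
    exact le_iSup₂_of_le δ hδ le_rfl
  simp only [iInf_lt_iff] at hinf
  obtain ⟨t, hA, hδt, hsum⟩ := hinf
  exact ⟨t, hA, hδt, hsum⟩

lemma hMeasK_eq_zero_of_forall_exists_cover (hp : 0 < p)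
    (h : ∀ δ : ℝ, 0 < δ → ∀ ε : ℝ≥0∞, ε ≠ 0 → ∃ (κ : Type) (_ : Encodable κ) (t : κ → Set Heis),
      A ⊆ ⋃ i, t i ∧ (∀ i, ediamK (t i) ≤ ENNReal.ofReal δ) ∧ ∑' i, ediamK (t i) ^ p ≤ ε) :
    hMeasK p A = 0 := by
  refine nonpos_iff_eq_zero.1 (iSup₂_le fun δ hδ => le_of_forall_gt fun ε hε => ?_)
  obtain ⟨ε', hε', hlt⟩ := exists_between hε
  obtain ⟨κ, _, t, hA, hδt, hsum⟩ := h δ hδ ε' hε'.ne'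
  refine lt_of_le_of_lt (iInf_le_of_le (fun n => ⋃ b ∈ Encodable.decode₂ κ n, t b)
    (iInf₂_le_of_le ?_ (fun n => ?_) ?_)) hlt
  · rwa [Encodable.iUnion_decode₂]
  · exact Encodable.iUnion_decode₂_cases (C := fun s => ediamK s ≤ ENNReal.ofReal δ)
      (ediamK_empty.trans_le zero_le) hδt
  · rwa [tsum_iUnion_decode₂ (fun s => ediamK s ^ p) (by simp [ediamK_empty, hp])]

lemma hMeasK_iUnion_eq_zero (hp : 0 < p) {A : ℕ → Set Heis} (h : ∀ i, hMeasK p (A i) = 0) :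
    hMeasK p (⋃ i, A i) = 0 := by
  refine hMeasK_eq_zero_of_forall_exists_cover hp fun δ hδ ε hε => ?_
  obtain ⟨e, hepos, hesum⟩ := ENNReal.exists_pos_sum_of_countable hε ℕ
  choose t hA hδt hsum using fun i =>
    exists_cover_of_hMeasK_eq_zero (h i) hδ (ENNReal.coe_ne_zero.2 (hepos i).ne')
  refine ⟨Σ _ : ℕ, ℕ, inferInstance, fun x => t x.1 x.2, ?_, fun x => hδt _ _, ?_⟩
  · refine Set.iUnion_subset fun i v hv => ?_
    obtain ⟨j, hj⟩ := Set.mem_iUnion.1 (hA i hv)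
    exact Set.mem_iUnion.2 ⟨⟨i, j⟩, hj⟩
  · rw [ENNReal.tsum_sigma' fun x : Σ _ : ℕ, ℕ => ediamK (t x.1 x.2) ^ p]
    exact (ENNReal.tsum_le_tsum fun i => (hsum i).le).trans hesum.le

lemma hMeasK_eq_zero_of_le {q : ℝ} (hq : 0 < q) (hpq : p ≤ q) (h : hMeasK p A = 0) :
    hMeasK q A = 0 := by
  refine hMeasK_eq_zero_of_forall_exists_cover hq fun δ hδ ε hε => ?_
  obtain ⟨t, hA, hδt, hsum⟩ := exists_cover_of_hMeasK_eq_zero h (lt_min hδ one_pos) hε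
  refine ⟨ℕ, inferInstance, t, hA,
    fun i => (hδt i).trans (ENNReal.ofReal_le_ofReal (min_le_left _ _)),
    (ENNReal.tsum_le_tsum fun i => ENNReal.rpow_le_rpow_of_exponent_ge ?_ hpq).trans hsum.le⟩
  exact (hδt i).trans (ENNReal.ofReal_le_one.2 (min_le_right _ _))

lemma hDimK_nonneg (A : Set Heis) : 0 ≤ hDimK A := Real.sInf_nonneg fun _ hp => hp.1

lemma hMeasK_ne_zero_of_lt_hDimK (hp : 0 ≤ p) (h : p < hDimK A) : hMeasK p A ≠ 0 := fun h0 =>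
  h.not_ge (csInf_le ⟨0, fun _ hq => hq.1⟩ ⟨hp, h0⟩)

variable {X : Type*} [MetricSpace X] [MeasurableSpace X] [BorelSpace X] {α : ℝ}

lemma exists_cover_tsum_lt_of_hausdorffMeasure_eq_zero {A : Set X} (h : μH[α] A = 0) {ε : ℝ≥0∞}
    (hε : ε ≠ 0) :
    ∃ t : ℕ → Set X, A ⊆ ⋃ n, t n ∧
      ∑' n, ⨆ _ : (t n).Nonempty, Metric.ediam (t n) ^ α < ε := by
  have hinf : ⨅ (t : ℕ → Set X) (_ : A ⊆ ⋃ n, t n) (_ : ∀ n, Metric.ediam (t n) ≤ 1),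
      ∑' n, ⨆ _ : (t n).Nonempty, Metric.ediam (t n) ^ α < ε := by
    refine lt_of_le_of_lt ?_ (pos_iff_ne_zero.2 hε)
    rw [← h, Measure.hausdorffMeasure_apply]
    exact le_iSup₂_of_le 1 one_pos le_rfl
  simp only [iInf_lt_iff] at hinf
  obtain ⟨t, hA, -, hsum⟩ := hinf
  exact ⟨t, hA, hsum⟩

lemma exists_cover_of_hausdorffMeasure_eq_zero (hα : 0 < α) {A : Set X} (h : μH[α] A = 0) {δ : ℝ}
    (hδ : 0 < δ) {ε : ℝ≥0∞} (hε : ε ≠ 0) :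
    ∃ (t : ℕ → Set X) (r : ℕ → ℝ), A ⊆ ⋃ n, t n ∧ (∀ n, 0 < r n ∧ r n ≤ δ) ∧
      (∀ n, ∀ x ∈ t n, ∀ y ∈ t n, dist x y ≤ r n) ∧ ∑' n, ENNReal.ofReal (r n ^ α) ≤ ε := by
  have hε' : min ε (ENNReal.ofReal (δ ^ α)) / 2 ≠ 0 :=
    (ENNReal.div_pos (lt_min (pos_iff_ne_zero.2 hε) (ENNReal.ofReal_pos.2 (by positivity))).ne'
      (by finiteness)).ne'
  obtain ⟨e, hepos, hesum⟩ := ENNReal.exists_pos_sum_of_countable hε' ℕ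
  obtain ⟨t, hA, hsum⟩ := exists_cover_tsum_lt_of_hausdorffMeasure_eq_zero h hε'
  let b : ℕ → ℝ≥0∞ := fun n => (⨆ _ : (t n).Nonempty, Metric.ediam (t n) ^ α) + e n
  have hbsum : ∑' n, b n ≤ min ε (ENNReal.ofReal (δ ^ α)) := by
    rw [ENNReal.tsum_add, ← ENNReal.add_halves (min ε _)]
    exact add_le_add hsum.le hesum.le
  have hbδ : ∀ n, b n ≤ ENNReal.ofReal (δ ^ α) := fun n =>
    (ENNReal.le_tsum n).trans (hbsum.trans (min_le_right _ _))
  have hb : ∀ n, b n ≠ ⊤ := fun n => ((hbδ n).trans_lt ENNReal.ofReal_lt_top).ne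
  have hbpos : ∀ n, 0 < (b n).toReal := fun n =>
    ENNReal.toReal_pos (by simp [b, (hepos n).ne']) (hb n)
  refine ⟨t, fun n => (b n).toReal ^ α⁻¹, hA, fun n => ⟨Real.rpow_pos_of_pos (hbpos n) _, ?_⟩,
    fun n x hx y hy => ?_, ?_⟩
  · rw [Real.rpow_inv_le_iff_of_pos (hbpos n).le hδ.le hα]
    exact ENNReal.toReal_le_of_le_ofReal (by positivity) (hbδ n)
  · rw [Real.le_rpow_inv_iff_of_pos dist_nonneg (hbpos n).le hα,
      ← ENNReal.ofReal_le_iff_le_toReal (hb n), ← ENNReal.ofReal_rpow_of_nonneg dist_nonneg hα.le,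
      ← edist_dist]
    have hne : (t n).Nonempty := ⟨x, hx⟩
    exact (ENNReal.rpow_le_rpow (Metric.edist_le_ediam_of_mem hx hy) hα.le).trans <|
      (le_iSup (fun _ : (t n).Nonempty => Metric.ediam (t n) ^ α) hne).trans le_self_add
  · refine (ENNReal.tsum_le_tsum fun n => ?_).trans (hbsum.trans (min_le_left _ _))
    rw [Real.rpow_inv_rpow (hbpos n).le hα.ne', ENNReal.ofReal_toReal (hb n)]

end KoranyiMeasure

section EuclideanComparison

open scoped ENNReal

lemma exists_fin_cover_ediamK_le {S : Set Heis} {R r : ℝ} (hR : 0 ≤ R) (hr : 0 < r)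
    (hSR : ∀ v ∈ S, ‖horiz v‖ ≤ R) (hSr : ∀ v ∈ S, ∀ w ∈ S, dist v w ≤ r) :
    ∃ (M : ℕ) (u : Fin M → Set Heis), (M : ℝ) ≤ 2 * (1 + 4 * R) / r + 1 ∧ S ⊆ ⋃ i, u i ∧
      ∀ i, ediamK (u i) ≤ ENNReal.ofReal (4 * r) := by
  rcases S.eq_empty_or_nonempty with rfl | ⟨u₀, hu₀⟩
  · exact ⟨0, fun _ => ∅, by push_cast; positivity, Set.empty_subset _, fun i => i.elim0⟩
  have hvert : ∀ v ∈ S, |vertDiff v u₀ - 0| ≤ (1 + 4 * R) * r := by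
    intro v hv
    have hz : ‖horiz u₀‖ * ‖horiz v - horiz u₀‖ ≤ R * (2 * r) :=
      mul_le_mul (hSR u₀ hu₀) ((norm_horiz_sub_le v u₀).trans
        (mul_le_mul_of_nonneg_left (hSr v hv u₀ hu₀) two_pos.le)) (norm_nonneg _) hR
    have ht : |v.2 - u₀.2| ≤ r := (le_max_right _ _).trans (hSr v hv u₀ hu₀)
    have hT := (abs_sub_abs_le_abs_sub _ _).trans (abs_vertDiff_sub_le v u₀)
    rw [sub_zero]
    linarith
  obtain ⟨M, u, hM, hSu, hu⟩ :=
    exists_fin_slices (by positivity) (show (0 : ℝ) < r ^ 2 by positivity) hvert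
  refine ⟨M, u, hM.trans_eq (by field_simp), hSu, fun i => ediamK_le fun v hv w hw => ?_⟩
  have hvS := (hu i).1 hv
  have hwS := (hu i).1 hw
  exact dH_le_of_abs_vertDiff_sub_le (hSr v hvS u₀ hu₀) (hSr w hwS u₀ hu₀) (hSr v hvS w hwS)
    ((hu i).2 v hv w hw)

lemma natCast_mul_ofReal_rpow_le {M : ℕ} {c r α : ℝ} (hr : 0 < r) (hr1 : r ≤ 1)
    (hM : (M : ℝ) ≤ c / r + 1) :
    (M : ℝ≥0∞) * ENNReal.ofReal (4 * r) ^ (α + 1) ≤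
      ENNReal.ofReal ((c + 1) * 4 ^ (α + 1)) * ENNReal.ofReal (r ^ α) := by
  have hMr : (M : ℝ) ≤ (c + 1) / r := by
    rw [add_div]
    linarith [one_le_one_div hr hr1]
  rw [← ENNReal.ofReal_natCast, ENNReal.ofReal_rpow_of_pos (by positivity),
    ← ENNReal.ofReal_mul (by positivity), ← ENNReal.ofReal_mul' (by positivity),
    Real.mul_rpow (by norm_num) hr.le, Real.rpow_add hr, Real.rpow_one]
  refine ENNReal.ofReal_le_ofReal ((mul_le_mul_of_nonneg_right hMr (by positivity)).trans_eq ?_)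
  field_simp

variable {α : ℝ} {A : Set Heis}

lemma hMeasK_add_one_eq_zero_of_norm_horiz_le (hα : 0 < α) {R : ℝ} (hR : 0 ≤ R)
    (hAR : ∀ v ∈ A, ‖horiz v‖ ≤ R) (h : μH[α] A = 0) : hMeasK (α + 1) A = 0 := by
  refine hMeasK_eq_zero_of_forall_exists_cover (by linarith) fun δ hδ ε hε => ?_
  let c : ℝ := (2 * (1 + 4 * R) + 1) * 4 ^ (α + 1)
  obtain ⟨t, r, hAt, hr, hdist, hsum⟩ := exists_cover_of_hausdorffMeasure_eq_zero hα h
    (lt_min (div_pos hδ four_pos) one_pos) (ENNReal.div_pos hε (ENNReal.ofReal_ne_top (r := c))).ne'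
  choose M u hM hu hdiam using fun n =>
    exists_fin_cover_ediamK_le (S := t n ∩ A) hR (hr n).1 (fun v hv => hAR v hv.2)
      fun v hv w hw => hdist n v hv.1 w hw.1
  refine ⟨Σ n, Fin (M n), inferInstance, fun x => u x.1 x.2, fun v hv => ?_, fun x => ?_, ?_⟩
  · obtain ⟨n, hn⟩ := Set.mem_iUnion.1 (hAt hv)
    obtain ⟨i, hi⟩ := Set.mem_iUnion.1 (hu n ⟨hn, hv⟩)
    exact Set.mem_iUnion.2 ⟨⟨n, i⟩, hi⟩
  · refine (hdiam x.1 x.2).trans (ENNReal.ofReal_le_ofReal ?_)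
    linarith [(hr x.1).2.trans (min_le_left _ _)]
  · calc ∑' x : Σ n, Fin (M n), ediamK (u x.1 x.2) ^ (α + 1)
        ≤ ∑' x : Σ n, Fin (M n), ENNReal.ofReal (4 * r x.1) ^ (α + 1) :=
          ENNReal.tsum_le_tsum fun x => ENNReal.rpow_le_rpow (hdiam x.1 x.2) (by linarith)
      _ = ∑' n, (M n : ℝ≥0∞) * ENNReal.ofReal (4 * r n) ^ (α + 1) := by
          rw [ENNReal.tsum_sigma' fun x : Σ n, Fin (M n) => ENNReal.ofReal (4 * r x.1) ^ (α + 1)]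
          simp
      _ ≤ ENNReal.ofReal c * (ε / ENNReal.ofReal c) :=
          (ENNReal.tsum_le_tsum fun n => natCast_mul_ofReal_rpow_le (hr n).1
            ((hr n).2.trans (min_le_right _ _)) (hM n)).trans
            (by rw [ENNReal.tsum_mul_left]; gcongr)
      _ ≤ ε := ENNReal.mul_div_le

lemma hMeasK_add_one_eq_zero (hα : 0 < α) (h : μH[α] A = 0) : hMeasK (α + 1) A = 0 := by
  have hA : A = ⋃ n : ℕ, A ∩ {v | ‖horiz v‖ ≤ n} := by
    have huniv : ⋃ n : ℕ, {v | ‖horiz v‖ ≤ n} = Set.univ :=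
      Set.iUnion_eq_univ_iff.2 fun v => exists_nat_ge ‖horiz v‖
    rw [← Set.inter_iUnion, huniv, Set.inter_univ]
  rw [hA]
  exact hMeasK_iUnion_eq_zero (by linarith) fun n =>
    hMeasK_add_one_eq_zero_of_norm_horiz_le hα n.cast_nonneg (fun v hv => hv.2)
      (measure_mono_null Set.inter_subset_left h)

lemma hausdorffMeasure_eq_zero_of_dimH_lt {X : Type*} [MetricSpace X] [MeasurableSpace X]
    [BorelSpace X] {d : ℝ} (hd : 0 ≤ d) {S : Set X} (h : dimH S < ENNReal.ofReal d) :
    μH[d] S = 0 := by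
  have h0 := hausdorffMeasure_of_dimH_lt (d := d.toNNReal) h
  rwa [Real.coe_toNNReal d hd] at h0

lemma hMeasK_five_eq_zero (A : Set Heis) : hMeasK 5 A = 0 := by
  have huniv : μH[(4 : ℝ)] (Set.univ : Set Heis) = 0 := by
    refine hausdorffMeasure_eq_zero_of_dimH_lt (by norm_num) ?_
    rw [Real.dimH_univ_eq_finrank]
    simp only [Module.finrank_prod, Module.finrank_self]
    rw [← ENNReal.ofReal_natCast, ENNReal.ofReal_lt_ofReal_iff (by norm_num)]
    norm_num
  have h5 := hMeasK_add_one_eq_zero four_pos (measure_mono_null (Set.subset_univ A) huniv)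
  norm_num at h5
  exact h5

lemma le_hDimK_of_hMeasK_ne_zero {p : ℝ} (hp : 0 < p) (h : hMeasK p A ≠ 0) : p ≤ hDimK A :=
  le_csInf ⟨5, by norm_num, hMeasK_five_eq_zero A⟩ fun _ hq =>
    le_of_not_ge fun hqp => h (hMeasK_eq_zero_of_le hp hqp hq.2)

end EuclideanComparison

section AngleEstimates

open ComplexConjugate

/-- The rotation of a complex number by the angle `-φ`. -/
def unrotate (φ : ℝ) (p : ℂ) : ℂ := Complex.exp (-(φ * Complex.I)) * p

lemma unrotate_re_im (φ : ℝ) (p : ℂ) :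
    (unrotate φ p).re = p.re * cos φ + p.im * sin φ ∧
      (unrotate φ p).im = p.im * cos φ - p.re * sin φ := by
  have hexp : Complex.exp (-(φ * Complex.I)) = ⟨cos φ, -sin φ⟩ := by
    rw [← neg_mul, ← Complex.ofReal_neg, Complex.exp_mul_I, ← Complex.ofReal_cos,
      ← Complex.ofReal_sin, Real.cos_neg, Real.sin_neg]
    apply Complex.ext <;> simp [Complex.cos_ofReal_re, Complex.sin_ofReal_re]
  rw [unrotate, hexp, Complex.mul_re, Complex.mul_im]
  exact ⟨by ring, by ring⟩

lemma norm_unrotate (φ : ℝ) (p : ℂ) : ‖unrotate φ p‖ = ‖p‖ := by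
  rw [unrotate, norm_mul, ← neg_mul, ← Complex.ofReal_neg, Complex.norm_exp_ofReal_mul_I, one_mul]

lemma unrotate_add (φ : ℝ) (p q : ℂ) : unrotate φ (p + q) = unrotate φ p + unrotate φ q :=
  mul_add _ _ _

lemma unrotate_sub (φ : ℝ) (p q : ℂ) : unrotate φ (p - q) = unrotate φ p - unrotate φ q :=
  mul_sub _ _ _

lemma unrotate_unrotate_sub (θ θ' : ℝ) (p : ℂ) :
    unrotate (θ' - θ) (unrotate θ p) = unrotate θ' p := by
  rw [unrotate, unrotate, unrotate, ← mul_assoc, ← Complex.exp_add]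
  push_cast
  ring_nf

variable {p q : ℂ} {φ δ : ℝ}

lemma norm_mul_abs_sin_le (hp : |p.im| ≤ δ) (hp' : |(unrotate φ p).im| ≤ δ) :
    ‖p‖ * |sin φ| ≤ 2 * δ := by
  have hsin : p * (sin φ : ℂ) = p.im * Complex.exp (φ * Complex.I) -
      ((unrotate φ p).im : ℂ) := by
    rw [(unrotate_re_im φ p).2, Complex.exp_mul_I, ← Complex.ofReal_cos, ← Complex.ofReal_sin]
    apply Complex.ext <;> simp
  calc ‖p‖ * |sin φ| = ‖p * (sin φ : ℂ)‖ := by rw [norm_mul, Complex.norm_real, Real.norm_eq_abs]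
    _ ≤ |p.im| * 1 + |(unrotate φ p).im| := by
      rw [hsin]
      refine (norm_sub_le _ _).trans_eq ?_
      rw [norm_mul, Complex.norm_exp_ofReal_mul_I, Complex.norm_real, Complex.norm_real,
        Real.norm_eq_abs, Real.norm_eq_abs]
    _ ≤ 2 * δ := by linarith

lemma half_le_abs_cos_of_abs_sin_le (h : |sin φ| ≤ 1 / 2) : 1 / 2 ≤ |cos φ| := by
  rw [← abs_of_pos (show (0 : ℝ) < 1 / 2 by norm_num), ← sq_le_sq] at h ⊢
  linarith [sin_sq_add_cos_sq φ]

lemma im_mul_sub_im_mul_unrotate_eq (p q : ℂ) (φ : ℝ) :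
    (p * q).im - (unrotate φ p * unrotate φ q).im = 2 * (sin φ * (p * unrotate φ q).re) := by
  simp only [Complex.mul_re p, Complex.mul_im p, Complex.mul_im (unrotate φ p), unrotate_re_im]
  linear_combination -(p.re * q.im + p.im * q.re) * sin_sq_add_cos_sq φ

lemma re_mul_unrotate_eq (p q : ℂ) (φ : ℝ) :
    (p * unrotate φ q).re = cos φ * (p * conj q).re -
      (cos φ * ((unrotate φ p).im * (unrotate φ q).im) +
        sin φ * ((unrotate φ p).im * (unrotate φ q).re) + p.im * (unrotate φ q).im) := by
  simp only [Complex.mul_re p, Complex.conj_re, Complex.conj_im, unrotate_re_im]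
  linear_combination (p.im * q.im * cos φ - p.re * q.im * sin φ) * sin_sq_add_cos_sq φ

lemma abs_cos_mul_abs_re_mul_conj_le {Q : ℝ} (hq : ‖q‖ ≤ Q) (hp : |p.im| ≤ δ)
    (hp' : |(unrotate φ p).im| ≤ δ) :
    |cos φ| * |(p * conj q).re| ≤ |(p * unrotate φ q).re| + 3 * (δ * Q) := by
  have hx : |(unrotate φ q).re| ≤ Q :=
    (Complex.abs_re_le_norm _).trans ((norm_unrotate φ q).trans_le hq)
  have hy : |(unrotate φ q).im| ≤ Q :=
    (Complex.abs_im_le_norm _).trans ((norm_unrotate φ q).trans_le hq)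
  have hmul : ∀ b x, |b| ≤ δ → |x| ≤ Q → |b * x| ≤ δ * Q := fun b x hb hx =>
    (abs_mul b x).trans_le (mul_le_mul hb hx (abs_nonneg _) ((abs_nonneg _).trans hb))
  have hcos : |cos φ * ((unrotate φ p).im * (unrotate φ q).im)| ≤ δ * Q :=
    (abs_mul _ _).trans_le <|
      (mul_le_of_le_one_left (abs_nonneg _) (abs_cos_le_one φ)).trans (hmul _ _ hp' hy)
  have hsin : |sin φ * ((unrotate φ p).im * (unrotate φ q).re)| ≤ δ * Q :=
    (abs_mul _ _).trans_le <|
      (mul_le_of_le_one_left (abs_nonneg _) (abs_sin_le_one φ)).trans (hmul _ _ hp' hx)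
  have herror := (abs_add_three (cos φ * ((unrotate φ p).im * (unrotate φ q).im))
    (sin φ * ((unrotate φ p).im * (unrotate φ q).re)) (p.im * (unrotate φ q).im)).trans
    (add_le_add (add_le_add hcos hsin) (hmul _ _ hp hy))
  rw [re_mul_unrotate_eq, ← abs_mul]
  linarith [(abs_sub_abs_le_abs_sub (cos φ * (p * conj q).re)
    (cos φ * ((unrotate φ p).im * (unrotate φ q).im) +
      sin φ * ((unrotate φ p).im * (unrotate φ q).re) + p.im * (unrotate φ q).im))]

lemma abs_re_mul_conj_mul_abs_sin_le {Q : ℝ} (hq : ‖q‖ ≤ Q) (hp : |p.im| ≤ δ)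
    (hp' : |(unrotate φ p).im| ≤ δ)
    (hpq : |(p * q).im - (unrotate φ p * unrotate φ q).im| ≤ 2 * δ ^ 2)
    (hN : 12 * (δ * Q) ≤ |(p * conj q).re|) :
    |(p * conj q).re| * |sin φ| ≤ 4 * δ ^ 2 := by
  have hQ : 0 ≤ Q := (norm_nonneg q).trans hq
  have hsin : |(p * conj q).re| * |sin φ| ≤ |(p * conj q).re| * (1 / 2) := by
    have hnorm : |(p * conj q).re| ≤ ‖p‖ * Q := by
      refine (Complex.abs_re_le_norm _).trans ?_
      rw [norm_mul, RCLike.norm_conj]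
      exact mul_le_mul_of_nonneg_left hq (norm_nonneg _)
    linarith [mul_le_mul_of_nonneg_right hnorm (abs_nonneg (sin φ)), abs_nonneg (p * conj q).re,
      mul_le_mul_of_nonneg_left (norm_mul_abs_sin_le hp hp') hQ]
  rcases (abs_nonneg (p * conj q).re).eq_or_lt with h0 | hpos
  · rw [← h0, zero_mul]
    positivity
  have hcos := half_le_abs_cos_of_abs_sin_le (le_of_mul_le_mul_left hsin hpos)
  have hre : |(p * conj q).re| ≤ 4 * |(p * unrotate φ q).re| := by
    linarith [abs_cos_mul_abs_re_mul_conj_le hq hp hp', mul_le_mul_of_nonneg_right hcos hpos.le]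
  calc |(p * conj q).re| * |sin φ|
      ≤ 2 * (2 * (|sin φ| * |(p * unrotate φ q).re|)) := by
        linarith [mul_le_mul_of_nonneg_left hre (abs_nonneg (sin φ))]
    _ = 2 * |(p * q).im - (unrotate φ p * unrotate φ q).im| := by
        rw [im_mul_sub_im_mul_unrotate_eq, abs_mul, abs_mul, abs_two]
    _ ≤ 4 * δ ^ 2 := by linarith

lemma abs_le_or_abs_sub_pi_le_or_abs_add_pi_le {x κ : ℝ} (hx : |x| ≤ π) (hκ : |sin x| ≤ κ) :
    |x| ≤ π / 2 * κ ∨ |x - π| ≤ π / 2 * κ ∨ |x + π| ≤ π / 2 * κ := by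
  have hjordan : ∀ y, |y| ≤ π / 2 → |sin y| ≤ κ → |y| ≤ π / 2 * κ := by
    intro y hy hsin
    have h := (Real.mul_abs_le_abs_sin hy).trans hsin
    rw [div_mul_eq_mul_div, div_le_iff₀ pi_pos] at h
    linarith
  obtain ⟨hx₁, hx₂⟩ := abs_le.1 hx
  by_cases hsmall : |x| ≤ π / 2
  · exact Or.inl (hjordan x hsmall hκ)
  rcases lt_abs.1 (not_le.1 hsmall) with h | h
  · refine Or.inr (Or.inl (hjordan _ (abs_le.2 ⟨by linarith, by linarith⟩) ?_))
    rwa [sin_sub_pi, abs_neg]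
  · refine Or.inr (Or.inr (hjordan _ (abs_le.2 ⟨by linarith, by linarith⟩) ?_))
    rwa [sin_add_pi, abs_neg]

lemma volume_le_of_abs_sin_sub_le {Θ : Set ℝ} {κ : ℝ} (hΘ : Θ ⊆ Set.Ico 0 π)
    (h : ∀ θ ∈ Θ, ∀ θ' ∈ Θ, |sin (θ' - θ)| ≤ κ) : volume Θ ≤ ENNReal.ofReal (3 * π * κ) := by
  rcases Θ.eq_empty_or_nonempty with rfl | ⟨θ, hθ⟩
  · simp
  have hκ : 0 ≤ κ := (abs_nonneg _).trans (h θ hθ θ hθ)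
  have hcover : Θ ⊆ Metric.closedBall θ (π / 2 * κ) ∪ Metric.closedBall (θ + π) (π / 2 * κ) ∪
      Metric.closedBall (θ - π) (π / 2 * κ) := by
    intro θ' hθ'
    have hdiff : |θ' - θ| ≤ π := by
      rw [abs_le]
      constructor <;> linarith [(hΘ hθ).1, (hΘ hθ).2, (hΘ hθ').1, (hΘ hθ').2]
    simp only [Set.mem_union, Metric.mem_closedBall, Real.dist_eq, or_assoc, ← sub_sub,
      ← sub_add]
    exact abs_le_or_abs_sub_pi_le_or_abs_add_pi_le hdiff (h θ hθ θ' hθ')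
  calc volume Θ
      ≤ volume (Metric.closedBall θ (π / 2 * κ)) + volume (Metric.closedBall (θ + π) (π / 2 * κ)) +
          volume (Metric.closedBall (θ - π) (π / 2 * κ)) :=
        (measure_mono hcover).trans ((measure_union_le _ _).trans
          (add_le_add_left (measure_union_le _ _) _))
    _ = ENNReal.ofReal (3 * π * κ) := by
        have hnonneg : 0 ≤ 2 * (π / 2 * κ) := by positivity
        simp only [Real.volume_closedBall]
        rw [← ENNReal.ofReal_add hnonneg hnonneg, ← ENNReal.ofReal_add (by positivity) hnonneg]
        ring_nf

end AngleEstimates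

section CloseAngles

open ComplexConjugate

lemma PVperp_eq (θ : ℝ) (v : Heis) :
    PVperp θ v =
      ((unrotate θ (horiz v)).im • ieV θ, v.2 - (unrotate θ (horiz v) ^ 2).im) := by
  have him : (unrotate θ (horiz v)).im = dotP v.1 (ieV θ) := by
    simp only [(unrotate_re_im _ _).2, horiz, dotP, ieV]
    ring
  refine Prod.ext (by rw [him, PVperp, projVperp]) ?_
  simp only [PVperp, projV, projVperp, wedge, dotP, eV, ieV, sq, Complex.mul_im, unrotate_re_im,
    horiz, Prod.smul_fst, Prod.smul_snd, smul_eq_mul]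
  linear_combination -2 * (v.1.1 * cos θ + v.1.2 * sin θ) * (v.1.2 * cos θ - v.1.1 * sin θ) *
    sin_sq_add_cos_sq θ

lemma norm_horiz_PVperp_sub (θ : ℝ) (v w : Heis) :
    ‖horiz (PVperp θ v) - horiz (PVperp θ w)‖ = |(unrotate θ (horiz v - horiz w)).im| := by
  rw [← sq_eq_sq₀ (norm_nonneg _) (abs_nonneg _), sq_abs, ← Complex.normSq_eq_norm_sq,
    Complex.normSq_apply, unrotate_sub, PVperp_eq, PVperp_eq]
  simp only [horiz, ieV, Complex.sub_re, Complex.sub_im, Prod.smul_fst, Prod.smul_snd, smul_eq_mul]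
  linear_combination ((unrotate θ ⟨v.1.1, v.1.2⟩).im - (unrotate θ ⟨w.1.1, w.1.2⟩).im) ^ 2 *
    sin_sq_add_cos_sq θ

lemma vertDiff_PVperp (θ : ℝ) (v w : Heis) :
    vertDiff (PVperp θ v) (PVperp θ w) =
      v.2 - w.2 - (unrotate θ (horiz v - horiz w) * unrotate θ (horiz v + horiz w)).im := by
  rw [unrotate_sub, unrotate_add, PVperp_eq, PVperp_eq, vertDiff]
  simp only [wedge, Prod.smul_fst, Prod.smul_snd, smul_eq_mul, sq, Complex.mul_im, Complex.sub_re,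
    Complex.sub_im, Complex.add_re, Complex.add_im]
  ring

lemma vertDiff_eq_add_im_mul_re (θ : ℝ) (v w : Heis) :
    vertDiff v w = vertDiff (PVperp θ v) (PVperp θ w) +
      2 * ((unrotate θ (horiz v - horiz w)).im * (unrotate θ (horiz v + horiz w)).re) := by
  rw [vertDiff_PVperp, vertDiff]
  simp only [wedge, Complex.mul_im, unrotate_re_im, Complex.sub_re, Complex.sub_im,
    Complex.add_re, Complex.add_im, horiz]
  linear_combination 2 * (v.1.1 * w.1.2 - v.1.2 * w.1.1) * sin_sq_add_cos_sq θ

/-- The angles `θ ∈ [0, π)` for which the vertical projections of `v` and `w` along `θ` are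
`δ`-close in the Korányi distance. -/
def closeAngles (δ : ℝ) (v w : Heis) : Set ℝ :=
  {θ ∈ Set.Ico 0 π | dH (PVperp θ v) (PVperp θ w) ≤ δ}

variable {δ R θ θ' : ℝ} {v w : Heis}

lemma abs_im_le_of_mem_closeAngles (hδ : 0 ≤ δ) (h : θ ∈ closeAngles δ v w) :
    |(unrotate θ (horiz v - horiz w)).im| ≤ δ := by
  rw [← norm_horiz_PVperp_sub]
  exact (pow_le_pow_iff_left₀ (norm_nonneg _) hδ four_ne_zero).1
    (le_of_add_le_of_nonneg_left ((dH_le_iff hδ).1 h.2) (sq_nonneg _))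

lemma abs_vertDiff_PVperp_le_of_mem_closeAngles (hδ : 0 ≤ δ) (h : θ ∈ closeAngles δ v w) :
    |vertDiff (PVperp θ v) (PVperp θ w)| ≤ δ ^ 2 := by
  refine abs_le_of_sq_le_sq ?_ (sq_nonneg δ)
  rw [← pow_mul]
  exact le_of_add_le_of_nonneg_right ((dH_le_iff hδ).1 h.2) (by positivity)

lemma abs_vertDiff_le_of_mem_closeAngles (hδ : 0 ≤ δ) (hv : ‖horiz v‖ ≤ R) (hw : ‖horiz w‖ ≤ R)
    (h : θ ∈ closeAngles δ v w) : |vertDiff v w| ≤ δ ^ 2 + 4 * (R * δ) := by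
  have hre : |(unrotate θ (horiz v + horiz w)).re| ≤ 2 * R := by
    refine (Complex.abs_re_le_norm _).trans ((norm_unrotate θ _).trans_le ?_)
    linarith [norm_add_le (horiz v) (horiz w)]
  have hprod := mul_le_mul (abs_im_le_of_mem_closeAngles hδ h) hre (abs_nonneg _) hδ
  rw [vertDiff_eq_add_im_mul_re θ]
  refine (abs_add_le _ _).trans (add_le_add (abs_vertDiff_PVperp_le_of_mem_closeAngles hδ h) ?_)
  rw [abs_mul, abs_two, abs_mul]
  linarith

lemma norm_sub_mul_abs_sin_le_of_mem_closeAngles (hδ : 0 ≤ δ) (h : θ ∈ closeAngles δ v w)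
    (h' : θ' ∈ closeAngles δ v w) : ‖horiz v - horiz w‖ * |sin (θ' - θ)| ≤ 2 * δ := by
  rw [← norm_unrotate θ (horiz v - horiz w)]
  refine norm_mul_abs_sin_le (abs_im_le_of_mem_closeAngles hδ h) ?_
  rw [unrotate_unrotate_sub]
  exact abs_im_le_of_mem_closeAngles hδ h'

lemma abs_norm_sq_sub_mul_abs_sin_le_of_mem_closeAngles (hδ : 0 ≤ δ) (hv : ‖horiz v‖ ≤ R)
    (hw : ‖horiz w‖ ≤ R) (hN : 24 * (R * δ) ≤ |‖horiz v‖ ^ 2 - ‖horiz w‖ ^ 2|)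
    (h : θ ∈ closeAngles δ v w) (h' : θ' ∈ closeAngles δ v w) :
    |‖horiz v‖ ^ 2 - ‖horiz w‖ ^ 2| * |sin (θ' - θ)| ≤ 4 * δ ^ 2 := by
  have hre : ‖horiz v‖ ^ 2 - ‖horiz w‖ ^ 2 =
      (unrotate θ (horiz v - horiz w) * conj (unrotate θ (horiz v + horiz w))).re := by
    rw [← norm_unrotate θ (horiz v), ← norm_unrotate θ (horiz w), unrotate_add, unrotate_sub,
      ← Complex.normSq_eq_norm_sq, ← Complex.normSq_eq_norm_sq, Complex.normSq_apply,
      Complex.normSq_apply]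
    simp only [Complex.mul_re, Complex.conj_re, Complex.conj_im, Complex.sub_re, Complex.sub_im,
      Complex.add_re, Complex.add_im]
    ring
  have hq : ‖unrotate θ (horiz v + horiz w)‖ ≤ 2 * R := by
    rw [norm_unrotate]
    linarith [norm_add_le (horiz v) (horiz w)]
  rw [hre] at hN ⊢
  refine abs_re_mul_conj_mul_abs_sin_le hq (abs_im_le_of_mem_closeAngles hδ h) ?_ ?_
    (by linarith)
  · rw [unrotate_unrotate_sub]
    exact abs_im_le_of_mem_closeAngles hδ h'
  · have hvert := (abs_sub _ _).trans (add_le_add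
      (abs_vertDiff_PVperp_le_of_mem_closeAngles hδ h')
      (abs_vertDiff_PVperp_le_of_mem_closeAngles hδ h))
    rw [vertDiff_PVperp, vertDiff_PVperp, sub_sub_sub_cancel_left] at hvert
    rw [unrotate_unrotate_sub, unrotate_unrotate_sub]
    linarith

lemma volume_closeAngles_le : volume (closeAngles δ v w) ≤ ENNReal.ofReal π :=
  (measure_mono (Set.sep_subset _ _)).trans_eq (by rw [Real.volume_Ico, sub_zero])

lemma volume_closeAngles_le_div_norm (hδ : 0 ≤ δ) (hvw : 0 < ‖horiz v - horiz w‖) :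
    volume (closeAngles δ v w) ≤ ENNReal.ofReal (6 * π * (δ / ‖horiz v - horiz w‖)) := by
  refine (volume_le_of_abs_sin_sub_le (κ := 2 * δ / ‖horiz v - horiz w‖) (Set.sep_subset _ _)
    fun θ hθ θ' hθ' => ?_).trans_eq (by ring_nf)
  rw [le_div_iff₀' hvw]
  exact norm_sub_mul_abs_sin_le_of_mem_closeAngles hδ hθ hθ'

lemma volume_closeAngles_le_div_norm_sq_sub (hδ : 0 ≤ δ) (hv : ‖horiz v‖ ≤ R)
    (hw : ‖horiz w‖ ≤ R) (hpos : 0 < |‖horiz v‖ ^ 2 - ‖horiz w‖ ^ 2|)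
    (hN : 24 * (R * δ) ≤ |‖horiz v‖ ^ 2 - ‖horiz w‖ ^ 2|) :
    volume (closeAngles δ v w) ≤
      ENNReal.ofReal (12 * π * (δ ^ 2 / |‖horiz v‖ ^ 2 - ‖horiz w‖ ^ 2|)) := by
  refine (volume_le_of_abs_sin_sub_le (κ := 4 * δ ^ 2 / |‖horiz v‖ ^ 2 - ‖horiz w‖ ^ 2|)
    (Set.sep_subset _ _) fun θ hθ θ' hθ' => ?_).trans_eq (by ring_nf)
  rw [le_div_iff₀' hpos]
  exact abs_norm_sq_sub_mul_abs_sin_le_of_mem_closeAngles hδ hv hw hN hθ hθ'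

end CloseAngles

section Shells

/-- The points `w ∈ K` whose horizontal component is `ρ`-close to that of `v`, and for which both
the difference of the squared norms of these components and the vertical component of `w⁻¹ v` are
at most `η`. -/
def shell (K : Set Heis) (v : Heis) (ρ η : ℝ) : Set Heis :=
  {w ∈ K | ‖horiz v - horiz w‖ ≤ ρ ∧ |‖horiz v‖ ^ 2 - ‖horiz w‖ ^ 2| ≤ η ∧ |vertDiff v w| ≤ η}

variable {K : Set Heis} {v w u : Heis} {e : ℂ} {c R ρ η : ℝ}

lemma norm_sq_sub_norm_sq_eq (he : ‖e‖ = 1) (p q : ℂ) :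
    ‖p‖ ^ 2 - ‖q‖ ^ 2 = ((e * p).re - (e * q).re) * ((e * p).re + (e * q).re) +
      ((e * p).im - (e * q).im) * ((e * p).im + (e * q).im) := by
  have hnorm : ∀ p, ‖p‖ = ‖e * p‖ := fun p => by rw [norm_mul, he, one_mul]
  rw [hnorm p, hnorm q, ← Complex.normSq_eq_norm_sq, ← Complex.normSq_eq_norm_sq,
    Complex.normSq_apply, Complex.normSq_apply]
  ring

-- Away from the vertical axis, the radius and one rotated coordinate determine the other one.
lemma norm_horiz_sub_le_of_mem_shell (hc : 0 < c) (he : ‖e‖ = 1)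
    (hKe : ∀ w ∈ K, c ≤ (e * horiz w).re) (hKR : ∀ w ∈ K, ‖horiz w‖ ≤ R)
    (hw : w ∈ shell K v ρ η) (hu : u ∈ shell K v ρ η)
    (him : |(e * horiz w).im - (e * horiz u).im| ≤ η) :
    ‖horiz w - horiz u‖ ≤ (1 + (1 + R) / c) * η := by
  have him_le : ∀ w ∈ K, |(e * horiz w).im| ≤ R := fun w hw =>
    (Complex.abs_im_le_norm _).trans (by rw [norm_mul, he, one_mul]; exact hKR w hw)
  have hη : 0 ≤ η := (abs_nonneg _).trans him
  have hprod_im : |((e * horiz w).im - (e * horiz u).im) *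
      ((e * horiz w).im + (e * horiz u).im)| ≤ η * (2 * R) := by
    rw [abs_mul]
    refine mul_le_mul him ((abs_add_le _ _).trans ?_) (abs_nonneg _) hη
    linarith [him_le w hw.1, him_le u hu.1]
  have hprod_re : |((e * horiz w).re - (e * horiz u).re) *
      ((e * horiz w).re + (e * horiz u).re)| ≤ 2 * (1 + R) * η := by
    have h := norm_sq_sub_norm_sq_eq he (horiz w) (horiz u)
    have hw' := abs_le.1 hw.2.2.1
    have hu' := abs_le.1 hu.2.2.1
    rw [abs_le] at hprod_im ⊢
    constructor <;> linarith
  have hre : |(e * horiz w).re - (e * horiz u).re| ≤ (1 + R) / c * η := by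
    rw [abs_mul] at hprod_re
    have hsum : 2 * c ≤ |(e * horiz w).re + (e * horiz u).re| :=
      le_trans (by linarith [hKe w hw.1, hKe u hu.1]) (le_abs_self _)
    rw [div_mul_eq_mul_div, le_div_iff₀ hc]
    linarith [mul_le_mul_of_nonneg_left hsum (abs_nonneg ((e * horiz w).re - (e * horiz u).re))]
  calc ‖horiz w - horiz u‖ = ‖e * horiz w - e * horiz u‖ := by
        rw [← mul_sub, norm_mul, he, one_mul]
    _ ≤ |(e * horiz w).re - (e * horiz u).re| + |(e * horiz w).im - (e * horiz u).im| := by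
        rw [← Complex.sub_re, ← Complex.sub_im]
        exact Complex.norm_le_abs_re_add_abs_im _
    _ ≤ (1 + (1 + R) / c) * η := by linarith

lemma abs_snd_sub_le_of_mem_shell (hv : ‖horiz v‖ ≤ R) (hw : w ∈ shell K v ρ η)
    (hu : u ∈ shell K v ρ η) : |w.2 - u.2| ≤ 2 * η + 2 * (R * ‖horiz w - horiz u‖) := by
  have heq : w.2 - u.2 = vertDiff v u - vertDiff v w - 2 * wedge v.1 (w - u).1 := by
    simp only [vertDiff, wedge, Prod.fst_sub, Prod.snd_sub]
    ring
  have hwedge : |wedge v.1 (w - u).1| ≤ R * ‖horiz w - horiz u‖ :=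
    (abs_wedge_le v (w - u)).trans (mul_le_mul_of_nonneg_right hv (norm_nonneg _))
  have hw' := abs_le.1 hw.2.2.2
  have hu' := abs_le.1 hu.2.2.2
  rw [heq]
  rw [abs_le] at hwedge ⊢
  constructor <;> linarith

lemma exists_measure_shell_le {μ : Measure Heis} {D α : ℝ} (hμ : IsFrostman μ D α) (hD : 0 < D)
    (hc : 0 < c) (he : ‖e‖ = 1) (hR : 0 ≤ R) (hKe : ∀ w ∈ K, c ≤ (e * horiz w).re)
    (hKR : ∀ w ∈ K, ‖horiz w‖ ≤ R) :
    ∃ L, 0 < L ∧ ∀ v ∈ K, ∀ ρ η, 0 ≤ ρ → 0 < η →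
      μ (shell K v ρ η) ≤ ENNReal.ofReal (L * ((ρ / η + 1) * η ^ α)) := by
  let H := 1 + (1 + R) / c
  let r := H + (2 + 2 * (R * H))
  have hr : 0 < r := add_pos (by positivity) (by positivity)
  refine ⟨2 * (D * r ^ α), by positivity, fun v hv ρ η hρ hη => ?_⟩
  obtain ⟨M, slice, hM, hcover, hslice⟩ := exists_fin_slices (f := fun w => (e * horiz w).im)
    (S := shell K v ρ η) (c := (e * horiz v).im) hρ hη fun w hw => by
      rw [← Complex.sub_im, ← mul_sub]
      refine (Complex.abs_im_le_norm _).trans ?_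
      rw [norm_mul, he, one_mul, norm_sub_rev]
      exact hw.2.1
  have hslice_le : ∀ i, μ (slice i) ≤ ENNReal.ofReal (D * (r * η) ^ α) := by
    intro i
    rcases (slice i).eq_empty_or_nonempty with hempty | ⟨u, hu⟩
    · simp [hempty]
    refine (measure_mono fun w hw => ?_).trans (hμ u (r * η) (by positivity))
    have hz := norm_horiz_sub_le_of_mem_shell hc he hKe hKR ((hslice i).1 hw) ((hslice i).1 hu)
      ((hslice i).2 w hw u hu)
    have ht := abs_snd_sub_le_of_mem_shell (hKR v hv) ((hslice i).1 hw) ((hslice i).1 hu)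
    have hRz := mul_le_mul_of_nonneg_left hz hR
    have hHη : 0 ≤ H * η := by positivity
    have hRHη : 0 ≤ R * (H * η) := by positivity
    have hrη : r * η = H * η + (2 * η + 2 * (R * (H * η))) := by ring
    rw [Metric.mem_closedBall, hrη]
    exact dist_le_of_norm_horiz_sub_le (by linarith) (by linarith)
  calc μ (shell K v ρ η)
      ≤ ∑ i, μ (slice i) := (measure_mono hcover).trans (measure_iUnion_fintype_le _ _)
    _ ≤ M * ENNReal.ofReal (D * (r * η) ^ α) := by
        refine (Finset.sum_le_sum fun i _ => hslice_le i).trans_eq ?_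
        rw [Finset.sum_const, Finset.card_fin, nsmul_eq_mul]
    _ = ENNReal.ofReal (M * (D * (r * η) ^ α)) := by
        rw [ENNReal.ofReal_mul M.cast_nonneg, ENNReal.ofReal_natCast]
    _ ≤ ENNReal.ofReal (2 * (D * r ^ α) * ((ρ / η + 1) * η ^ α)) := by
        rw [mul_rpow hr.le hη.le]
        have hM' : (M : ℝ) ≤ 2 * (ρ / η + 1) := hM.trans (by rw [mul_div_assoc]; linarith)
        refine ENNReal.ofReal_le_ofReal ((mul_le_mul_of_nonneg_right hM' ?_).trans_eq (by ring))
        positivity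

end Shells

section EnergyEstimate

open scoped ENNReal

lemma exists_dyadic_scale {x δ : ℝ} {M : ℕ} (hδ : 0 < δ) (hM : x ≤ 2 ^ M * δ) :
    ∃ i ∈ Finset.range (M + 1), x ≤ 2 ^ (i + 1) * δ ∧ (2 ^ i * δ ≤ x ∨ i = 0) := by
  rcases lt_or_ge x δ with hx | hx
  · exact ⟨0, by simp, by norm_num; linarith, Or.inr rfl⟩
  obtain ⟨i, hi, hi'⟩ := exists_nat_pow_near ((one_le_div hδ).2 hx) one_lt_two
  rw [le_div_iff₀ hδ] at hi
  rw [div_lt_iff₀ hδ] at hi'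
  have hiM : (2 : ℝ) ^ i ≤ 2 ^ M := le_of_mul_le_mul_right (hi.trans hM) hδ
  exact ⟨i, Finset.mem_range_succ_iff.2 ((pow_le_pow_iff_right₀ one_lt_two).1 hiM), hi'.le,
    Or.inl hi⟩

lemma setLIntegral_le_sum_mul_measure {X ι : Type*} [MeasurableSpace X] {μ : Measure X}
    {K : Set X} (hK : MeasurableSet K) {f : X → ℝ≥0∞} {S : ι → Set X} {b : ι → ℝ≥0∞}
    {J : Finset ι} (h : ∀ x ∈ K, f x ≠ 0 → ∃ j ∈ J, x ∈ S j ∧ f x ≤ b j) :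
    ∫⁻ x in K, f x ∂μ ≤ ∑ j ∈ J, b j * μ (S j) := by
  let g : ι → X → ℝ≥0∞ := fun j => (toMeasurable μ (S j)).indicator fun _ => b j
  calc ∫⁻ x in K, f x ∂μ
      ≤ ∫⁻ x in K, ∑ j ∈ J, g j x ∂μ := by
        refine setLIntegral_mono' hK fun x hx => ?_
        by_cases hfx : f x = 0
        · exact hfx ▸ zero_le
        obtain ⟨j, hj, hjS, hjb⟩ := h x hx hfx
        refine hjb.trans (le_trans ?_ (Finset.single_le_sum (fun _ _ => zero_le) hj))
        exact (Set.indicator_of_mem (subset_toMeasurable μ (S j) hjS) fun _ => b j).ge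
    _ ≤ ∫⁻ x, ∑ j ∈ J, g j x ∂μ := setLIntegral_le_lintegral _ _
    _ = ∑ j ∈ J, b j * μ (S j) := by
        rw [lintegral_finsetSum _ fun j _ =>
          measurable_const.indicator (measurableSet_toMeasurable _ _)]
        refine Finset.sum_congr rfl fun j _ => ?_
        rw [lintegral_indicator_const (measurableSet_toMeasurable _ _), measure_toMeasurable]

variable {K : Set Heis} {v w : Heis} {R δ : ℝ} {M : ℕ}

lemma mem_shell_of_closeAngles_nonempty (hδ : 0 < δ) (hδ1 : δ ≤ 1) (hR : 1 ≤ R)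
    (hv : ‖horiz v‖ ≤ R) (hw : ‖horiz w‖ ≤ R) (hwK : w ∈ K) (h : (closeAngles δ v w).Nonempty)
    {ρ η : ℝ} (hρ : ‖horiz v - horiz w‖ ≤ ρ) (hη : |‖horiz v‖ ^ 2 - ‖horiz w‖ ^ 2| ≤ η)
    (hRη : 24 * (R * δ) ≤ η) : w ∈ shell K v ρ η := by
  obtain ⟨θ, hθ⟩ := h
  have hδR : δ * δ ≤ R * δ := mul_le_mul_of_nonneg_right (hδ1.trans hR) hδ.le
  have hvert := abs_vertDiff_le_of_mem_closeAngles hδ.le hv hw hθ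
  exact ⟨hwK, hρ, hη, by linarith [mul_nonneg hδ.le hδ.le]⟩

lemma exists_mem_shell_volume_closeAngles_le_of_lt (hδ : 0 < δ) (hδ1 : δ ≤ 1) (hR : 1 ≤ R)
    (hM : 2 * R ≤ 2 ^ M * δ) (hv : ‖horiz v‖ ≤ R) (hw : ‖horiz w‖ ≤ R) (hwK : w ∈ K)
    (h : (closeAngles δ v w).Nonempty)
    (hN : |‖horiz v‖ ^ 2 - ‖horiz w‖ ^ 2| < 24 * (R * δ)) :
    ∃ i ∈ Finset.range (M + 1), w ∈ shell K v (2 ^ (i + 1) * δ) (24 * (R * δ)) ∧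
      volume (closeAngles δ v w) ≤ ENNReal.ofReal (6 * π / 2 ^ i) := by
  obtain ⟨i, hi, hupper, hlower⟩ := exists_dyadic_scale hδ
    (((norm_sub_le _ _).trans (by linarith)).trans hM : ‖horiz v - horiz w‖ ≤ 2 ^ M * δ)
  refine ⟨i, hi, mem_shell_of_closeAngles_nonempty hδ hδ1 hR hv hw hwK h hupper hN.le le_rfl, ?_⟩
  rcases hlower with hlower | rfl
  · have hpos : 0 < ‖horiz v - horiz w‖ := lt_of_lt_of_le (by positivity) hlower
    refine (volume_closeAngles_le_div_norm hδ.le hpos).trans (ENNReal.ofReal_le_ofReal ?_)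
    rw [div_eq_mul_one_div _ ((2 : ℝ) ^ i)]
    refine mul_le_mul_of_nonneg_left ?_ (by positivity)
    rwa [div_le_div_iff₀ hpos (by positivity), one_mul, mul_comm]
  · exact volume_closeAngles_le.trans (ENNReal.ofReal_le_ofReal (by linarith [pi_pos]))

lemma exists_mem_shell_volume_closeAngles_le_of_le (hδ : 0 < δ) (hδ1 : δ ≤ 1) (hR : 1 ≤ R)
    (hM : R ^ 2 ≤ 2 ^ M * δ) (hv : ‖horiz v‖ ≤ R) (hw : ‖horiz w‖ ≤ R) (hwK : w ∈ K)
    (h : (closeAngles δ v w).Nonempty)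
    (hN : 24 * (R * δ) ≤ |‖horiz v‖ ^ 2 - ‖horiz w‖ ^ 2|) :
    ∃ i ∈ Finset.range (M + 1), w ∈ shell K v (2 * R) (2 ^ (i + 1) * δ) ∧
      volume (closeAngles δ v w) ≤ ENNReal.ofReal (12 * π * δ / 2 ^ i) := by
  have hpos : 0 < |‖horiz v‖ ^ 2 - ‖horiz w‖ ^ 2| := lt_of_lt_of_le (by positivity) hN
  have hle : |‖horiz v‖ ^ 2 - ‖horiz w‖ ^ 2| ≤ R ^ 2 :=
    abs_sub_le_of_nonneg_of_le (sq_nonneg _) (pow_le_pow_left₀ (norm_nonneg _) hv 2)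
      (sq_nonneg _) (pow_le_pow_left₀ (norm_nonneg _) hw 2)
  obtain ⟨i, hi, hupper, hlower⟩ := exists_dyadic_scale hδ (hle.trans hM)
  have hlower : 2 ^ i * δ ≤ |‖horiz v‖ ^ 2 - ‖horiz w‖ ^ 2| := by
    rcases hlower with hlower | rfl
    · exact hlower
    · linarith [le_mul_of_one_le_left hδ.le hR]
  refine ⟨i, hi, mem_shell_of_closeAngles_nonempty hδ hδ1 hR hv hw hwK h
    ((norm_sub_le _ _).trans (by linarith)) hupper (hN.trans hupper), ?_⟩
  refine (volume_closeAngles_le_div_norm_sq_sub hδ.le hv hw hpos hN).trans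
    (ENNReal.ofReal_le_ofReal ?_)
  rw [mul_div_assoc]
  refine mul_le_mul_of_nonneg_left ?_ (by positivity)
  rw [div_le_div_iff₀ hpos (by positivity)]
  linarith [mul_le_mul_of_nonneg_left hlower hδ.le]

lemma setLIntegral_volume_closeAngles_le {μ : Measure Heis} (hK : MeasurableSet K) (hδ : 0 < δ)
    (hδ1 : δ ≤ 1) (hR : 1 ≤ R) (hM : 2 * R ^ 2 ≤ 2 ^ M * δ) (hKR : ∀ w ∈ K, ‖horiz w‖ ≤ R)
    (hv : v ∈ K) :
    ∫⁻ w in K, volume (closeAngles δ v w) ∂μ ≤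
      ∑ i ∈ Finset.range (M + 1), (ENNReal.ofReal (6 * π / 2 ^ i) *
        μ (shell K v (2 ^ (i + 1) * δ) (24 * (R * δ))) +
        ENNReal.ofReal (12 * π * δ / 2 ^ i) * μ (shell K v (2 * R) (2 ^ (i + 1) * δ))) := by
  have hRsq : R ≤ R ^ 2 := le_self_pow₀ hR two_ne_zero
  refine (setLIntegral_le_sum_mul_measure (J := (Finset.range (M + 1)).disjSum (.range (M + 1)))
    (S := Sum.elim (fun i => shell K v (2 ^ (i + 1) * δ) (24 * (R * δ)))
      fun i => shell K v (2 * R) (2 ^ (i + 1) * δ))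
    (b := Sum.elim (fun i => ENNReal.ofReal (6 * π / 2 ^ i))
      fun i => ENNReal.ofReal (12 * π * δ / 2 ^ i)) hK fun w hw hvol => ?_).trans_eq ?_
  · have hne := nonempty_of_measure_ne_zero hvol
    rcases lt_or_ge |‖horiz v‖ ^ 2 - ‖horiz w‖ ^ 2| (24 * (R * δ)) with hN | hN
    · obtain ⟨i, hi, h⟩ := exists_mem_shell_volume_closeAngles_le_of_lt hδ hδ1 hR
        (by linarith) (hKR v hv) (hKR w hw) hw hne hN
      exact ⟨.inl i, Finset.inl_mem_disjSum.2 hi, h⟩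
    · obtain ⟨i, hi, h⟩ := exists_mem_shell_volume_closeAngles_le_of_le hδ hδ1 hR
        (by linarith [sq_nonneg R]) (hKR v hv) (hKR w hw) hw hne hN
      exact ⟨.inr i, Finset.inr_mem_disjSum.2 hi, h⟩
  · rw [Finset.sum_disjSum, ← Finset.sum_add_distrib]
    rfl

variable {L α : ℝ}

lemma near_shell_bound_le (hδ : 0 < δ) (hR : 1 ≤ R) (hL : 0 ≤ L) (i : ℕ) :
    6 * π / 2 ^ i * (L * ((2 ^ (i + 1) * δ / (24 * (R * δ)) + 1) * (24 * (R * δ)) ^ α)) ≤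
      12 * π * L * (24 * R) ^ α * δ ^ α := by
  have hpow : (1 : ℝ) ≤ 2 ^ i := one_le_pow₀ one_le_two
  have hratio : 2 ^ (i + 1) * δ / (24 * (R * δ)) ≤ 2 ^ i := by
    rw [div_le_iff₀ (by positivity), pow_succ]
    have h := mul_le_mul_of_nonneg_left hR (show 0 ≤ 2 ^ i * δ by positivity)
    have h0 : 0 ≤ 2 ^ i * δ := by positivity
    linarith
  have hcount : (2 ^ (i + 1) * δ / (24 * (R * δ)) + 1) / 2 ^ i ≤ 2 := by
    rw [div_le_iff₀ (by positivity)]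
    linarith
  have hfactor : 0 ≤ 6 * π * L * ((24 * R) ^ α * δ ^ α) := by positivity
  rw [show (24 * (R * δ)) ^ α = (24 * R) ^ α * δ ^ α by
    rw [← mul_assoc, mul_rpow (by positivity) hδ.le]]
  linear_combination mul_le_mul_of_nonneg_left hcount hfactor

-- For `α ≤ 2` the factor `η ^ (α - 2)` is largest at the smallest scale.
lemma far_shell_bound_le (hδ : 0 < δ) (hR : 0 ≤ R) (hL : 0 ≤ L) (hα : α ≤ 2) {i : ℕ}
    (hi : i ≤ M) :
    12 * π * δ / 2 ^ i * (L * ((2 * R / (2 ^ (i + 1) * δ) + 1) * (2 ^ (i + 1) * δ) ^ α)) ≤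
      48 * π * L * (R + 2 ^ M * δ) * δ ^ α := by
  set η : ℝ := 2 ^ (i + 1) * δ with hη_def
  have hη : 0 < η := by positivity
  have hηM : η ≤ 2 * (2 ^ M * δ) := by
    have hpow : (2 : ℝ) ^ i ≤ 2 ^ M := pow_le_pow_right₀ one_le_two hi
    rw [hη_def, pow_succ]
    linarith [mul_le_mul_of_nonneg_right hpow hδ.le]
  have hδη : δ ≤ η := le_mul_of_one_le_left hδ.le (one_le_pow₀ one_le_two)
  have hsplit : ∀ x : ℝ, 0 < x → x ^ α = x ^ (α - 2) * x ^ 2 := fun x hx => by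
    rw [← rpow_natCast, ← rpow_add hx]
    norm_num
  calc 12 * π * δ / 2 ^ i * (L * ((2 * R / η + 1) * η ^ α))
      = 24 * π * L * (2 * R + η) * (η ^ (α - 2) * δ ^ 2) := by
        rw [hsplit η hη, show 12 * π * δ / 2 ^ i = 24 * π * δ ^ 2 / η by
          rw [hη_def]
          field_simp
          ring]
        field_simp
    _ ≤ 24 * π * L * (2 * R + 2 * (2 ^ M * δ)) * (δ ^ (α - 2) * δ ^ 2) := by
        have hle := rpow_le_rpow_of_nonpos hδ hδη (sub_nonpos.2 hα)
        gcongr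
    _ = 48 * π * L * (R + 2 ^ M * δ) * δ ^ α := by
        rw [hsplit δ hδ]
        ring

lemma exists_setLIntegral_volume_closeAngles_le {μ : Measure Heis} {D c : ℝ} {e : ℂ}
    (hμ : IsFrostman μ D α) (hD : 0 < D) (hα : α ≤ 2) (hK : MeasurableSet K) (hc : 0 < c)
    (he : ‖e‖ = 1) (hR : 1 ≤ R) (hKe : ∀ w ∈ K, c ≤ (e * horiz w).re)
    (hKR : ∀ w ∈ K, ‖horiz w‖ ≤ R) :
    ∃ C, ∀ v ∈ K, ∀ k : ℕ, ∫⁻ w in K, volume (closeAngles ((1 / 2) ^ k) v w) ∂μ ≤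
      ENNReal.ofReal (C * ((k + 1) * ((1 / 2) ^ k) ^ α)) := by
  have hR0 : 0 ≤ R := zero_le_one.trans hR
  obtain ⟨L, hL, hshell⟩ := exists_measure_shell_le hμ hD hc he hR0 hKe hKR
  obtain ⟨N, hN⟩ := pow_unbounded_of_one_lt (2 * R ^ 2) one_lt_two
  let B := 12 * π * L * (24 * R) ^ α + 48 * π * L * (R + 2 ^ N)
  have hB : 0 ≤ B := by positivity
  refine ⟨(N + 1) * B, fun v hv k => ?_⟩
  set δ : ℝ := (1 / 2) ^ k with hδ_def
  have hδ : 0 < δ := by positivity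
  have hscale : 2 ^ (N + k) * δ = 2 ^ N := by
    rw [hδ_def, pow_add, mul_assoc, ← mul_pow]
    norm_num
  have hterm : ∀ i ∈ Finset.range (N + k + 1), ENNReal.ofReal (6 * π / 2 ^ i) *
      μ (shell K v (2 ^ (i + 1) * δ) (24 * (R * δ))) +
      ENNReal.ofReal (12 * π * δ / 2 ^ i) * μ (shell K v (2 * R) (2 ^ (i + 1) * δ)) ≤
      ENNReal.ofReal (B * δ ^ α) := by
    intro i hi
    have hnear := hshell v hv (2 ^ (i + 1) * δ) (24 * (R * δ)) (by positivity) (by positivity)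
    have hfar := hshell v hv (2 * R) (2 ^ (i + 1) * δ) (by positivity) (by positivity)
    refine (add_le_add (mul_le_mul_right hnear _) (mul_le_mul_right hfar _)).trans ?_
    rw [← ENNReal.ofReal_mul (by positivity), ← ENNReal.ofReal_mul (by positivity),
      ← ENNReal.ofReal_add (by positivity) (by positivity)]
    refine ENNReal.ofReal_le_ofReal ((add_le_add (near_shell_bound_le hδ hR hL.le i)
      (far_shell_bound_le hδ hR0 hL.le hα (Finset.mem_range_succ_iff.1 hi))).trans_eq ?_)
    rw [hscale]
    ring
  refine (setLIntegral_volume_closeAngles_le hK hδ (pow_le_one₀ (by norm_num) (by norm_num)) hR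
    (hN.le.trans_eq hscale.symm) hKR hv).trans ((Finset.sum_le_sum hterm).trans ?_)
  rw [Finset.sum_const, Finset.card_range, nsmul_eq_mul, ← ENNReal.ofReal_natCast,
    ← ENNReal.ofReal_mul (by positivity)]
  refine ENNReal.ofReal_le_ofReal ?_
  have hNk : (0 : ℝ) ≤ N * k := by positivity
  push_cast
  calc ((N : ℝ) + k + 1) * (B * δ ^ α) ≤ ((N + 1) * (k + 1)) * (B * δ ^ α) :=
        mul_le_mul_of_nonneg_right (by linarith) (mul_nonneg hB (by positivity))
    _ = (N + 1) * B * ((k + 1) * δ ^ α) := by ring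

end EnergyEstimate

section MassDistribution

open scoped ENNReal

variable {X : Type*} [MeasurableSpace X] {μ : Measure X} {P : X → Heis} {σ : ℝ}

/-- The image of `μ` under `P` gives Korányi balls about `P x` of dyadic radius `r ≤ 1` mass at
most `M * r ^ σ`. -/
def HasDyadicBound (μ : Measure X) (P : X → Heis) (σ : ℝ) (M : ℕ) (x : X) : Prop :=
  ∀ k : ℕ, μ {y | dH (P x) (P y) ≤ (1 / 2) ^ k} ≤ M * ENNReal.ofReal (((1 / 2) ^ k) ^ σ)

lemma measure_le_mul_ediamK_rpow {S : Set X} {t : Set Heis} {M : ℕ} (hσ : 0 < σ)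
    (hS : ∀ x ∈ S, P x ∈ t ∧ HasDyadicBound μ P σ M x) (ht : ediamK t ≤ ENNReal.ofReal 1) :
    μ S ≤ M * ENNReal.ofReal (2 ^ σ) * ediamK t ^ σ := by
  rcases S.eq_empty_or_nonempty with rfl | ⟨x, hx⟩
  · simp
  have hscale : ∀ k : ℕ, ediamK t ≤ ENNReal.ofReal ((1 / 2) ^ k) →
      μ S ≤ M * ENNReal.ofReal (((1 / 2) ^ k) ^ σ) := fun k hk =>
    (measure_mono fun y hy => dH_le_of_ediamK_le (by positivity) hk (hS x hx).1 (hS y hy).1).trans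
      ((hS x hx).2 k)
  obtain ⟨d, hd, hdt⟩ : ∃ d, 0 ≤ d ∧ ediamK t = ENNReal.ofReal d :=
    ⟨_, ENNReal.toReal_nonneg,
      (ENNReal.ofReal_toReal (ne_top_of_le_ne_top ENNReal.ofReal_ne_top ht)).symm⟩
  rcases hd.eq_or_lt with rfl | hpos
  · have hlim : Filter.Tendsto (fun k : ℕ => (M : ℝ≥0∞) * ENNReal.ofReal (((1 / 2) ^ k) ^ σ))
        Filter.atTop (nhds (M * ENNReal.ofReal (0 ^ σ))) :=
      ENNReal.Tendsto.const_mul (ENNReal.tendsto_ofReal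
        ((tendsto_pow_atTop_nhds_zero_of_lt_one (by norm_num) (by norm_num)).rpow_const
          (Or.inr hσ.le))) (Or.inr (ENNReal.natCast_ne_top M))
    rw [zero_rpow hσ.ne', ENNReal.ofReal_zero, mul_zero] at hlim
    exact (ge_of_tendsto' hlim fun k => hscale k (by simp [hdt])).trans zero_le
  rw [hdt] at ht hscale ⊢
  obtain ⟨k, hlower, hupper⟩ := exists_nat_pow_near_of_lt_one hpos
    ((ENNReal.ofReal_le_ofReal_iff zero_le_one).1 ht) (by norm_num : (0 : ℝ) < 1 / 2) (by norm_num)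
  refine (hscale k (ENNReal.ofReal_le_ofReal hupper)).trans ?_
  rw [ENNReal.ofReal_rpow_of_pos hpos, mul_assoc, ← ENNReal.ofReal_mul (by positivity),
    ← mul_rpow zero_le_two hd]
  gcongr
  rw [pow_succ] at hlower
  linarith

lemma hMeasK_image_ne_zero [NeZero μ] {A : Set X} (hσ : 0 < σ) (hA : ∀ᵐ x ∂μ, x ∈ A)
    (hbound : ∀ᵐ x ∂μ, ∃ M, HasDyadicBound μ P σ M x) : hMeasK σ (P '' A) ≠ 0 := by
  obtain ⟨M, hM⟩ : ∃ M, μ {x ∈ A | HasDyadicBound μ P σ M x} ≠ 0 := by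
    by_contra! hnull
    obtain ⟨x, hx, hxA, M, hxM⟩ :=
      ((ae_all_iff.2 fun M => measure_eq_zero_iff_ae_notMem.1 (hnull M)).and
        (hA.and hbound)).exists
    exact hx M ⟨hxA, hxM⟩
  intro hzero
  set S := {x ∈ A | HasDyadicBound μ P σ M x}
  let b : ℝ≥0∞ := M * ENNReal.ofReal (2 ^ σ)
  have hb : b ≠ ∞ := ENNReal.mul_ne_top (ENNReal.natCast_ne_top M) ENNReal.ofReal_ne_top
  obtain ⟨ε, hε, hεS⟩ := ENNReal.exists_nnreal_pos_mul_lt hb hM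
  rw [mul_comm] at hεS
  obtain ⟨t, hcover, hdiam, hsum⟩ := exists_cover_of_hMeasK_eq_zero hzero one_pos
    (ENNReal.coe_ne_zero.2 hε.ne')
  refine lt_irrefl (μ S) (lt_of_le_of_lt ?_ hεS)
  calc μ S ≤ ∑' i, μ (S ∩ P ⁻¹' t i) := by
        refine (measure_mono fun x hx => ?_).trans (measure_iUnion_le _)
        obtain ⟨i, hi⟩ := Set.mem_iUnion.1 (hcover ⟨x, hx.1, rfl⟩)
        exact Set.mem_iUnion.2 ⟨i, hx, hi⟩
    _ ≤ ∑' i, b * ediamK (t i) ^ σ := ENNReal.tsum_le_tsum fun i =>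
        measure_le_mul_ediamK_rpow hσ (fun x hx => ⟨hx.2, hx.1.2⟩) (hdiam i)
    _ ≤ b * ε := by
        rw [ENNReal.tsum_mul_left]
        exact mul_le_mul_right hsum.le b

end MassDistribution

section Tonelli

open scoped ENNReal

variable {Θ X : Type*} [MeasurableSpace Θ] [MeasurableSpace X] {ν : Measure Θ} {μ : Measure X}
  [SFinite ν] [SFinite μ]

lemma lintegral_prod_measure_eq {E : Set ((Θ × X) × X)} (hE : MeasurableSet E) :
    ∫⁻ p, μ {y | (p, y) ∈ E} ∂(ν.prod μ) = ∫⁻ x, ∫⁻ y, ν {θ | ((θ, x), y) ∈ E} ∂μ ∂μ := by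
  refine (lintegral_prod_symm _ (measurable_measure_prodMk_left hE).aemeasurable).trans ?_
  refine lintegral_congr fun x => ?_
  have hslice : MeasurableSet {q : Θ × X | ((q.1, x), q.2) ∈ E} :=
    hE.preimage (f := fun q : Θ × X => ((q.1, x), q.2)) (by fun_prop)
  exact (Measure.prod_apply hslice).symm.trans (Measure.prod_apply_symm hslice)

lemma ae_ae_tsum_mul_measure_ne_top {E : ℕ → Set ((Θ × X) × X)} (hE : ∀ k, MeasurableSet (E k))
    {a : ℕ → ℝ≥0∞}
    (hsum : ∑' k, a k * ∫⁻ x, ∫⁻ y, ν {θ | ((θ, x), y) ∈ E k} ∂μ ∂μ ≠ ∞) :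
    ∀ᵐ θ ∂ν, ∀ᵐ x ∂μ, ∑' k, a k * μ {y | ((θ, x), y) ∈ E k} ≠ ∞ := by
  have hmeasure : ∀ k, Measurable fun p => μ {y | (p, y) ∈ E k} := fun k =>
    measurable_measure_prodMk_left (hE k)
  have hmeas : ∀ k, Measurable fun p => a k * μ {y | (p, y) ∈ E k} := fun k =>
    (hmeasure k).const_mul _
  have hint : ∫⁻ p, ∑' k, a k * μ {y | (p, y) ∈ E k} ∂(ν.prod μ) ≠ ∞ := by
    rw [lintegral_tsum fun k => (hmeas k).aemeasurable]
    simpa only [lintegral_const_mul _ (hmeasure _),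
      lintegral_prod_measure_eq (hE _)] using hsum
  exact (Measure.ae_ae_of_ae_prod (ae_lt_top (Measurable.tsum hmeas) hint)).mono fun θ hθ =>
    hθ.mono fun x hx => hx.ne

end Tonelli

section ProjectedMeasure

open scoped ENNReal

lemma measurableSet_dH_PVperp_le (δ : ℝ) :
    MeasurableSet {p : (ℝ × Heis) × Heis | dH (PVperp p.1.1 p.1.2) (PVperp p.1.1 p.2) ≤ δ} := by
  have hproj : Continuous fun q : ℝ × Heis => PVperp q.1 q.2 := by
    unfold PVperp projV projVperp wedge dotP eV ieV
    fun_prop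
  have hpair : Continuous fun p : (ℝ × Heis) × Heis =>
      (PVperp p.1.1 p.1.2, PVperp p.1.1 p.2) :=
    (hproj.comp continuous_fst).prodMk
      (hproj.comp ((continuous_fst.comp continuous_fst).prodMk continuous_snd))
  exact (isClosed_le (continuous_dH.comp hpair) continuous_const).measurableSet

lemma tsum_ofReal_dyadic_ne_top {σ α C : ℝ} (hσα : σ < α) :
    ∑' k : ℕ, ENNReal.ofReal (((1 / 2) ^ k) ^ (-σ)) *
      ENNReal.ofReal (C * ((k + 1) * ((1 / 2) ^ k) ^ α)) ≠ ∞ := by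
  have hratio : ‖(1 / 2 : ℝ) ^ (α - σ)‖ < 1 := by
    rw [Real.norm_of_nonneg (by positivity)]
    exact rpow_lt_one (by norm_num) (by norm_num) (sub_pos.2 hσα)
  have hsummable : Summable fun k : ℕ => C * ((k + 1) * ((1 / 2 : ℝ) ^ (α - σ)) ^ k) := by
    refine (((summable_pow_mul_geometric_of_norm_lt_one 1 hratio).add
      (summable_geometric_of_norm_lt_one hratio)).congr fun k => ?_).mul_left C
    ring
  convert hsummable.tsum_ofReal_ne_top using 4 with k
  rw [← ENNReal.ofReal_mul (by positivity), ← rpow_natCast, ← rpow_natCast,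
    ← rpow_mul (by norm_num), ← rpow_mul (by norm_num), ← rpow_mul (by norm_num),
    show (α - σ) * k = k * α + k * -σ by ring, rpow_add (by norm_num)]
  ring_nf

lemma ae_ae_exists_hasDyadicBound {μ : Measure Heis} [IsProbabilityMeasure μ] {σ α C : ℝ}
    {K : Set Heis} (hσα : σ < α) (hK : μ Kᶜ = 0)
    (hint : ∀ v ∈ K, ∀ k : ℕ, ∫⁻ w in K, volume (closeAngles ((1 / 2) ^ k) v w) ∂μ ≤
      ENNReal.ofReal (C * ((k + 1) * ((1 / 2) ^ k) ^ α))) :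
    ∀ᵐ θ ∂(volume.restrict (Set.Ico 0 π)), ∀ᵐ v ∂μ,
      ∃ M, HasDyadicBound μ (PVperp θ) σ M v := by
  let E : ℕ → Set ((ℝ × Heis) × Heis) := fun k =>
    {p | dH (PVperp p.1.1 p.1.2) (PVperp p.1.1 p.2) ≤ (1 / 2) ^ k}
  have hK' : ∀ᵐ v ∂μ, v ∈ K := hK
  have hangles : ∀ k v w, volume.restrict (Set.Ico 0 π) {θ | ((θ, v), w) ∈ E k} =
      volume (closeAngles ((1 / 2) ^ k) v w) := fun k v w => by
    have hmeas : MeasurableSet {θ | ((θ, v), w) ∈ E k} :=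
      (measurableSet_dH_PVperp_le _).preimage (f := fun θ : ℝ => ((θ, v), w)) (by fun_prop)
    rw [Measure.restrict_apply hmeas, Set.inter_comm]
    rfl
  have henergy : ∀ k : ℕ, ∫⁻ v, ∫⁻ w, volume (closeAngles ((1 / 2) ^ k) v w) ∂μ ∂μ ≤
      ENNReal.ofReal (C * ((k + 1) * ((1 / 2) ^ k) ^ α)) := fun k => by
    refine (lintegral_mono_ae (hK'.mono fun v hv => ?_)).trans_eq
      ((lintegral_const _).trans (by rw [measure_univ, mul_one]))
    simpa only [Measure.restrict_eq_self_of_ae_mem hK'] using hint v hv k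
  have hfinite := ae_ae_tsum_mul_measure_ne_top (ν := volume.restrict (Set.Ico 0 π)) (μ := μ)
    (E := E) (a := fun k => ENNReal.ofReal (((1 / 2) ^ k) ^ (-σ)))
    (fun k => measurableSet_dH_PVperp_le _)
    (ne_top_of_le_ne_top (tsum_ofReal_dyadic_ne_top hσα) (ENNReal.tsum_le_tsum fun k => by
      simp only [hangles]
      exact mul_le_mul_right (henergy k) _))
  filter_upwards [hfinite] with θ hθ
  filter_upwards [hθ] with v hv
  obtain ⟨M, hM⟩ := ENNReal.exists_nat_gt hv
  refine ⟨M, fun k => ?_⟩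
  have hterm := (ENNReal.le_tsum k).trans hM.le
  rw [mul_comm, rpow_neg (by positivity), ENNReal.ofReal_inv_of_pos (by positivity),
    ← div_eq_mul_inv] at hterm
  exact (ENNReal.div_le_iff_le_mul (Or.inl (ENNReal.ofReal_pos.2 (by positivity)).ne')
    (Or.inl ENNReal.ofReal_ne_top)).1 hterm

end ProjectedMeasure

section Selection

lemma hausdorffMeasure_vertical_axis_eq_zero {α : ℝ} (hα : 1 < α) :
    μH[α] {v : Heis | horiz v = 0} = 0 := by
  have hrange : {v : Heis | horiz v = 0} ⊆ Set.range fun t : ℝ => (((0, 0), t) : Heis) :=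
    fun v hv => ⟨v.2, Prod.ext (Prod.ext (congrArg Complex.re hv).symm
      (congrArg Complex.im hv).symm) rfl⟩
  have hlipschitz : LipschitzWith 1 fun t : ℝ => (((0, 0), t) : Heis) :=
    LipschitzWith.prodMk_left (0, 0)
  refine measure_mono_null hrange (hausdorffMeasure_eq_zero_of_dimH_lt (by linarith) ?_)
  exact hlipschitz.dimH_range_le.trans_lt (Real.dimH_univ.trans_lt (ENNReal.one_lt_ofReal.2 hα))

lemma exists_re_I_pow_mul_pos {z : ℂ} (hz : z ≠ 0) : ∃ j : ℕ, 0 < (Complex.I ^ j * z).re := by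
  by_contra! h
  refine hz (Complex.ext (le_antisymm ?_ ?_) (le_antisymm ?_ ?_))
  · simpa using h 0
  · simpa [Complex.I_sq] using h 2
  · simpa [pow_succ] using h 3
  · simpa using h 1

lemma exists_analyticSet_subset_half_space {A : Set Heis} {α : ℝ} (hA : AnalyticSet A)
    (hα : 1 < α) (hpos : μH[α] A ≠ 0) :
    ∃ B ⊆ A, AnalyticSet B ∧ μH[α] B ≠ 0 ∧
      ∃ (e : ℂ) (c : ℝ), ‖e‖ = 1 ∧ 0 < c ∧ ∀ w ∈ B, c ≤ (e * horiz w).re := by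
  by_contra! hnone
  let H : ℕ × ℕ → Set Heis := fun i => {w | 1 / ((i.1 : ℝ) + 1) ≤ (Complex.I ^ i.2 * horiz w).re}
  have hclosed : ∀ i, IsClosed (H i) := fun i => isClosed_le continuous_const
    (Complex.continuous_re.comp (continuous_const.mul continuous_horiz))
  have hnull : ∀ i, μH[α] (A ∩ H i) = 0 := fun i => by
    by_contra hne
    obtain ⟨w, hw, hlt⟩ := hnone _ Set.inter_subset_left
      (analyticSet_inter hA (hclosed i).analyticSet) hne (Complex.I ^ i.2) (1 / ((i.1 : ℝ) + 1))
      (by simp) (by positivity)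
    exact hlt.not_ge hw.2
  have hcover : A ⊆ {v | horiz v = 0} ∪ ⋃ i, A ∩ H i := fun v hv => by
    refine or_iff_not_imp_left.2 fun hv0 => ?_
    obtain ⟨j, hj⟩ := exists_re_I_pow_mul_pos hv0
    obtain ⟨n, hn⟩ := exists_nat_one_div_lt hj
    exact Set.mem_iUnion.2 ⟨(n, j), hv, hn.le⟩
  exact hpos (measure_mono_null hcover (measure_union_null
    (hausdorffMeasure_vertical_axis_eq_zero hα) (measure_iUnion_null hnull)))

end Selection

section Projections

variable {A : Set Heis}

/-- The coordinates of `Heis`, whose distance as a product of copies of `ℝ` is the sup distance. -/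
def coordinates : Heis ≃ᵢ (Fin 3 → ℝ) where
  toFun v := ![v.1.1, v.1.2, v.2]
  invFun x := ((x 0, x 1), x 2)
  left_inv _ := rfl
  right_inv x := by
    ext i
    fin_cases i <;> rfl
  isometry_toFun := by
    refine Isometry.of_dist_eq fun v w => le_antisymm ?_ ?_
    · refine (dist_pi_le_iff dist_nonneg).2 fun i => ?_
      fin_cases i
      · exact (le_max_left _ _).trans (le_max_left _ _)
      · exact (le_max_right _ _).trans (le_max_left _ _)
      · exact le_max_right _ _
    · have hcoord := dist_le_pi_dist ![v.1.1, v.1.2, v.2] ![w.1.1, w.1.2, w.2]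
      exact max_le (max_le (hcoord 0) (hcoord 1)) (hcoord 2)

lemma ae_le_hDimK_image_PVperp_of_hausdorffMeasure_ne_zero {α σ : ℝ} (hA : AnalyticSet A)
    (hα1 : 1 < α) (hα2 : α ≤ 2) (hσ : 0 < σ) (hσα : σ < α) (hpos : μH[α] A ≠ 0) :
    ∀ᵐ θ ∂(volume.restrict (Set.Ico 0 π)), σ ≤ hDimK (PVperp θ '' A) := by
  obtain ⟨B, hBA, hB, hBpos, e, c, he, hc, hBe⟩ := exists_analyticSet_subset_half_space hA hα1 hpos
  obtain ⟨μ, D, K, hprob, hD, hK, hKB, hKμ, hμ⟩ :=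
    exists_isFrostman_of_isometryEquiv coordinates hB (by linarith) hBpos
  obtain ⟨R, hR⟩ := hK.exists_bound_of_continuousOn continuous_horiz.continuousOn
  obtain ⟨C, hC⟩ := exists_setLIntegral_volume_closeAngles_le hμ hD hα2 hK.measurableSet hc he
    (le_max_left 1 R) (fun w hw => hBe w (hKB hw)) fun w hw => (hR w hw).trans (le_max_right 1 R)
  have hμA : ∀ᵐ v ∂μ, v ∈ A := measure_mono_null (Set.compl_subset_compl.2 (hKB.trans hBA)) hKμ
  filter_upwards [ae_ae_exists_hasDyadicBound hσα hKμ hC] with θ hθ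
  exact le_hDimK_of_hMeasK_ne_zero hσ (hMeasK_image_ne_zero hσ hμA hθ)

lemma ae_le_hDimK_image_PVperp_of_lt {σ : ℝ} (hA : AnalyticSet A) (h2 : 2 < hDimK A)
    (hσ : σ < min (hDimK A - 1) 2) :
    ∀ᵐ θ ∂(volume.restrict (Set.Ico 0 π)), σ ≤ hDimK (PVperp θ '' A) := by
  rcases le_or_gt σ 0 with hσ0 | hσ0
  · exact ae_of_all _ fun θ => hσ0.trans (hDimK_nonneg _)
  obtain ⟨α, hαlower, hαupper⟩ : ∃ α, max σ 1 < α ∧ α < min (hDimK A - 1) 2 :=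
    exists_between (max_lt hσ (lt_min (by linarith) (by norm_num)))
  obtain ⟨hσα, hα1⟩ := max_lt_iff.1 hαlower
  obtain ⟨hαdim, hα2⟩ := lt_min_iff.1 hαupper
  refine ae_le_hDimK_image_PVperp_of_hausdorffMeasure_ne_zero hA hα1 hα2.le hσ0 hσα fun hnull => ?_
  exact hMeasK_ne_zero_of_lt_hDimK (by linarith) (lt_tsub_iff_right.1 hαdim)
    (hMeasK_add_one_eq_zero (by linarith) hnull)

end Projections

theorem stmt_19_general (A : Set Heis) (hA : AnalyticSet A) (h2 : 2 < hDimK A) :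
    ∀ᵐ θ ∂(volume.restrict (Set.Ico 0 π)), min (hDimK A - 1) 2 ≤ hDimK (PVperp θ '' A) := by
  have hrat : ∀ᵐ θ ∂(volume.restrict (Set.Ico 0 π)), ∀ q : ℚ, (q : ℝ) < min (hDimK A - 1) 2 →
      (q : ℝ) ≤ hDimK (PVperp θ '' A) :=
    ae_all_iff.2 fun q => by
      by_cases hq : (q : ℝ) < min (hDimK A - 1) 2
      · exact (ae_le_hDimK_image_PVperp_of_lt hA h2 hq).mono fun θ hθ _ => hθ
      · exact ae_of_all _ fun θ hq' => absurd hq' hq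
  exact hrat.mono fun θ hθ => le_of_forall_rat_lt_imp_le hθ

/-- Main theorem: a.e. lower bound for the Hausdorff dimension of vertical
projections of an analytic set A ⊆ ℍ with dim A = s ∈ (2,4]. -/
theorem stmt_19 (A : Set Heis) (hA : MeasureTheory.AnalyticSet A)
    (s : ℝ) (hdim : hDimK A = s) (h2 : 2 < s) (h4 : s ≤ 4) :
    ∀ᵐ θ ∂(volume.restrict (Set.Ico (0 : ℝ) Real.pi)),
      (s ≤ 5 / 2 → s / 2 ≤ hDimK (PVperp θ '' A)) ∧
      (5 / 2 < s → s * (s + 2) / (4 * s - 1) ≤ hDimK (PVperp θ '' A)) := by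
  subst hdim
  filter_upwards [stmt_19_general A hA h2] with θ hθ
  refine ⟨fun _ => (le_min ?_ ?_).trans hθ, fun _ => (le_min ?_ ?_).trans hθ⟩
  · linarith
  · linarith
  · rw [div_le_iff₀ (by linarith)]
    nlinarith
  · rw [div_le_iff₀ (by linarith)]
    nlinarith
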